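/- Let m, n > 0 be integers. The subposet of the m-Tamari lattice T_n^(m) induced on its meet-irreducible elements is order-isomorphic to the subposet of the m-cover poset T_n^⟨m⟩ (of the Tamari lattice T_n = T_n^(1)) induced on its meet-irreducible elements; likewise, the subposet of T_n^(m) induced on its join-irreducible elements is order-isomorphic to the subposet of T_n^⟨m⟩ induced on its join-irreducible elements. -/

import Mathlib

/-- The set `D_n^(m)` of m-Dyck paths of length `(m+1)n`, encoded as step sequences:
weakly increasing `u : Fin n → ℕ` with `u_k ≤ m(k−1)` (1-indexed), i.e. `u k ≤ m·k`
(0-indexed). -/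
def DyckM (m n : ℕ) : Type :=
  {u : Fin n → ℕ // Monotone u ∧ ∀ k : Fin n, u k ≤ m * (k : ℕ)}

/-- The rotation cover relation on step sequences: `v` is obtained from `u` by choosing a
position `i ≥ 2` (1-indexed; here `i ≥ 1`, 0-indexed) with `u_{i−1} < u_i` and
decreasing every entry of the primitive subsequence of `u` at position `i` (which ends
at position `k`) by one. -/
def RotCovBy (m n : ℕ) (u v : Fin n → ℕ) : Prop :=
  ∃ i k : Fin n, (0 : ℕ) < (i : ℕ) ∧ (i : ℕ) ≤ (k : ℕ) ∧
    (∀ j : Fin n, (j : ℕ) + 1 = (i : ℕ) → u j < u i) ∧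
    (∀ j : Fin n, (i : ℕ) < (j : ℕ) → (j : ℕ) ≤ (k : ℕ) →
      u j - u i < m * ((j : ℕ) - (i : ℕ))) ∧
    ((k : ℕ) + 1 = n ∨
      ∀ j : Fin n, (j : ℕ) = (k : ℕ) + 1 → m * ((j : ℕ) - (i : ℕ)) ≤ u j - u i) ∧
    (∀ j : Fin n, v j = if (i : ℕ) ≤ (j : ℕ) ∧ (j : ℕ) ≤ (k : ℕ) then u j - 1 else u j)

/-- The rotation order `≤_rot` on `D_n^(m)`: the reflexive-transitive closure of the
rotation cover relation.  The m-Tamari lattice is `T_n^(m) = (D_n^(m), ≤_rot)`. -/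
def TamariLe (m n : ℕ) : DyckM m n → DyckM m n → Prop :=
  Relation.ReflTransGen (fun a b => RotCovBy m n a.1 b.1)

/-- `b` covers `a` with respect to the relation `r` (playing the role of `≤`). -/
def RelCovBy {β : Type*} (r : β → β → Prop) (a b : β) : Prop :=
  r a b ∧ a ≠ b ∧ ∀ c, r a c → r c b → c = a ∨ c = b

/-- `x` is meet-irreducible w.r.t. the order relation `r`: non-maximal with exactly one
upper cover. -/
def RelMeetIrred {β : Type*} (r : β → β → Prop) (x : β) : Prop :=
  (∃ y, r x y ∧ x ≠ y) ∧ ∃! y, RelCovBy r x y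

/-- `x` is join-irreducible w.r.t. the order relation `r`: non-minimal with exactly one
lower cover. -/
def RelJoinIrred {β : Type*} (r : β → β → Prop) (x : β) : Prop :=
  (∃ y, r y x ∧ x ≠ y) ∧ ∃! y, RelCovBy r y x

/-- The defining shape of elements of the m-cover poset of the Tamari lattice `T_n`:
tuples `(0̂^{l₀}, p₁^{l₁}, p₂^{l₂})` with `p₁ ⋖ p₂` a cover relation of `T_n` and `0̂`
the least element of `T_n`. -/
def IsTamariCoverTuple (m n : ℕ) (f : Fin m → DyckM 1 n) : Prop :=
  ∃ (z : DyckM 1 n) (l₀ l₁ l₂ : ℕ) (p₁ p₂ : DyckM 1 n),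
    (∀ x, TamariLe 1 n z x) ∧ l₀ + l₁ + l₂ = m ∧ RelCovBy (TamariLe 1 n) p₁ p₂ ∧
    ∀ i : Fin m, f i = if (i : ℕ) < l₀ then z else if (i : ℕ) < l₀ + l₁ then p₁ else p₂

/-- The m-cover poset `T_n^⟨m⟩` of the Tamari lattice `T_n`. -/
def TamariMCover (m n : ℕ) : Type :=
  {f : Fin m → DyckM 1 n // IsTamariCoverTuple m n f}

/-- The componentwise order on the m-cover poset `T_n^⟨m⟩`. -/
def TamariMCoverLe (m n : ℕ) (f g : TamariMCover m n) : Prop :=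
  ∀ i : Fin m, TamariLe 1 n (f.1 i) (g.1 i)

section Order

variable {β : Type*} [PartialOrder β]

lemma relCovBy_iff_covBy {a b : β} : RelCovBy (· ≤ ·) a b ↔ a ⋖ b := by
  constructor
  · rintro ⟨h, hne, hc⟩
    refine ⟨lt_of_le_of_ne h hne, fun c hac hcb => ?_⟩
    rcases hc c hac.le hcb.le with rfl | rfl
    · exact lt_irrefl _ hac
    · exact lt_irrefl _ hcb
  · intro h
    exact ⟨h.le, h.ne, fun c hac hcb => h.eq_or_eq hac hcb⟩

lemma relMeetIrred_iff {x : β} : RelMeetIrred (· ≤ ·) x ↔ ∃! y, x ⋖ y := by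
  simp only [RelMeetIrred, relCovBy_iff_covBy]
  exact ⟨fun h => h.2, fun h => ⟨h.exists.imp fun y hy => ⟨hy.le, hy.ne⟩, h⟩⟩

lemma relJoinIrred_iff {x : β} : RelJoinIrred (· ≤ ·) x ↔ ∃! y, y ⋖ x := by
  simp only [RelJoinIrred, relCovBy_iff_covBy]
  exact ⟨fun h => h.2, fun h => ⟨h.exists.imp fun y hy => ⟨hy.le, hy.ne'⟩, h⟩⟩

lemma existsUnique_covBy_of_forall_lt {x y : β} (hxy : x < y) (h : ∀ z, x < z → y ≤ z) :
    ∃! y, x ⋖ y := by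
  refine ⟨y, ⟨hxy, fun c hxc hcy => (h c hxc).not_gt hcy⟩, fun z hz => ?_⟩
  exact (hz.eq_or_eq hxy.le (h z hz.lt)).resolve_left hxy.ne' |>.symm

lemma existsUnique_covBy_of_forall_gt {x y : β} (hxy : y < x) (h : ∀ z, z < x → z ≤ y) :
    ∃! y, y ⋖ x := by
  refine ⟨y, ⟨hxy, fun c hyc hcx => (h c hcx).not_gt hyc⟩, fun z hz => ?_⟩
  exact (hz.eq_or_eq (h z hz.lt) hxy.le).resolve_right hxy.ne |>.symm

lemma exists_covBy_le_of_lt_of_finite [Finite β] {x z : β} (h : x < z) : ∃ y, x ⋖ y ∧ y ≤ z := by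
  obtain ⟨y, hyz, hy⟩ := (Set.toFinite {y | x < y}).exists_le_minimal h
  exact ⟨y, ⟨hy.prop, fun c hxc hcy => (hy.le_of_le hxc hcy.le).not_gt hcy⟩, hyz⟩

lemma exists_le_covBy_of_lt_of_finite [Finite β] {x z : β} (h : z < x) : ∃ y, y ⋖ x ∧ z ≤ y := by
  obtain ⟨y, hyz, hy⟩ := (Set.toFinite {y | y < x}).exists_le_maximal h
  exact ⟨y, ⟨hy.prop, fun c hyc hcx => (hy.le_of_ge hcx hyc.le).not_gt hyc⟩, hyz⟩

lemma exists_lt_le_le_of_existsUnique [Finite β] {x z w : β} (hx : ∃! y, x ⋖ y) (hz : x < z)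
    (hw : x < w) : ∃ y, x < y ∧ y ≤ z ∧ y ≤ w := by
  obtain ⟨y, hy, hyz⟩ := exists_covBy_le_of_lt_of_finite hz
  obtain ⟨y', hy', hyw⟩ := exists_covBy_le_of_lt_of_finite hw
  obtain rfl := hx.unique hy hy'
  exact ⟨y, hy.lt, hyz, hyw⟩

lemma exists_gt_le_le_of_existsUnique [Finite β] {x z w : β} (hx : ∃! y, y ⋖ x) (hz : z < x)
    (hw : w < x) : ∃ y, y < x ∧ z ≤ y ∧ w ≤ y := by
  obtain ⟨y, hy, hyz⟩ := exists_le_covBy_of_lt_of_finite hz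
  obtain ⟨y', hy', hyw⟩ := exists_le_covBy_of_lt_of_finite hw
  obtain rfl := hx.unique hy hy'
  exact ⟨y, hy.lt, hyz, hyw⟩

/-- Two relations parametrised onto by the same antisymmetric relation are isomorphic. -/
lemma exists_equiv_of_parametrizations {A X Y : Type*} {R : A → A → Prop} {rX : X → X → Prop}
    {rY : Y → Y → Prop} (hR : ∀ a b, R a b → R b a → a = b) (hRr : ∀ a, R a a)
    (f : A → X) (g : A → Y) (hf : Function.Surjective f) (hg : Function.Surjective g)
    (hfR : ∀ a b, rX (f a) (f b) ↔ R a b) (hgR : ∀ a b, rY (g a) (g b) ↔ R a b) :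
    ∃ e : X ≃ Y, ∀ x y, rX x y ↔ rY (e x) (e y) := by
  have hfi : Function.Injective f := fun a b h =>
    hR a b ((hfR a b).1 (h ▸ (hfR a a).2 (hRr a))) ((hfR b a).1 (h ▸ (hfR a a).2 (hRr a)))
  have hgi : Function.Injective g := fun a b h =>
    hR a b ((hgR a b).1 (h ▸ (hgR a a).2 (hRr a))) ((hgR b a).1 (h ▸ (hgR a a).2 (hRr a)))
  refine ⟨(Equiv.ofBijective f ⟨hfi, hf⟩).symm.trans (Equiv.ofBijective g ⟨hgi, hg⟩), ?_⟩
  intro x y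
  obtain ⟨a, rfl⟩ := hf x
  obtain ⟨b, rfl⟩ := hf y
  have key : ∀ c, (Equiv.ofBijective f ⟨hfi, hf⟩).symm (f c) = c := fun c =>
    (Equiv.ofBijective f ⟨hfi, hf⟩).symm_apply_apply c
  rw [Equiv.trans_apply, Equiv.trans_apply, key, key, hfR]
  exact (hgR a b).symm

end Order

section Tamari

variable {m n : ℕ}

lemma rotCovBy_iff {u v : Fin n → ℕ} (hu : Monotone u) :
    RotCovBy m n u v ↔ ∃ i k : Fin n, (0 : ℕ) < i ∧ i ≤ k ∧
      (∀ j : Fin n, (j : ℕ) + 1 = i → u j < u i) ∧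
      (∀ j, i < j → j ≤ k → u j + m * i < u i + m * j) ∧
      (∀ j : Fin n, (j : ℕ) = k + 1 → u i + m * j ≤ u j + m * i) ∧
      ∀ j, v j = if i ≤ j ∧ j ≤ k then u j - 1 else u j := by
  unfold RotCovBy
  refine exists_congr fun i => exists_congr fun k => ?_
  simp only [Fin.le_def, Fin.lt_def]
  refine and_congr_right fun _ => and_congr_right fun hik => and_congr_right fun _ =>
    and_congr ?_ (and_congr ?_ Iff.rfl)
  · refine forall_congr' fun j => forall_congr' fun hij => forall_congr' fun _ => ?_
    have h1 := hu (show i ≤ j from hij.le)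
    have h2 : m * (i : ℕ) ≤ m * j := Nat.mul_le_mul_left _ hij.le
    rw [Nat.mul_sub]
    have h3 : m * (j : ℕ) = m * i + m * (j - i) := by rw [← Nat.mul_add]; congr 1; omega
    omega
  · constructor
    · rintro (h | h) j hj
      · have := j.2
        omega
      · have := h j hj
        have h1 := hu (show i ≤ j by rw [Fin.le_def]; omega)
        rw [Nat.mul_sub] at this
        omega
    · intro h
      refine Or.inr fun j hj => ?_
      have := h j hj
      rw [Nat.mul_sub]
      omega

lemma RotCovBy.le {u v : Fin n → ℕ} (h : RotCovBy m n u v) (j : Fin n) :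
    v j ≤ u j := by
  obtain ⟨i, k, -, -, -, -, -, h⟩ := h
  rw [h j]
  split_ifs <;> omega

lemma TamariLe.ge {u v : DyckM m n} (h : TamariLe m n u v) (j : Fin n) :
    v.1 j ≤ u.1 j := by
  induction h with
  | refl => exact le_rfl
  | tail _ h ih => exact (h.le j).trans ih

instance : PartialOrder (DyckM m n) where
  le := TamariLe m n
  le_refl _ := Relation.ReflTransGen.refl
  le_trans _ _ _ := Relation.ReflTransGen.trans
  le_antisymm _ _ h h' := Subtype.ext (funext fun j => (h'.ge j).antisymm (h.ge j))

lemma DyckM.coe_ge {u v : DyckM m n} (h : u ≤ v) (j : Fin n) : v.1 j ≤ u.1 j :=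
  TamariLe.ge h j

lemma RotCovBy.dyck_le {u v : DyckM m n} (h : RotCovBy m n u.1 v.1) : u ≤ v :=
  Relation.ReflTransGen.single h

instance : Finite (DyckM m n) := by
  have hf : Set.Finite {u : Fin n → ℕ | u ∈ Set.Iic fun _ => m * n} := Set.finite_Iic _
  refine Set.Finite.to_subtype (hf.subset ?_)
  rintro u ⟨-, h⟩ k
  exact (h k).trans (Nat.mul_le_mul_left _ k.2.le)

lemma DyckM.val_zero (u : DyckM m n) {j : Fin n} (hj : (j : ℕ) = 0) : u.1 j = 0 := by
  have := u.2.2 j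
  rw [hj] at this
  omega

/-- Rotation steps do not increase differences inside a primitive subsequence. -/
lemma RotCovBy.add_le_add {u v : DyckM m n} (h : RotCovBy m n u.1 v.1) {i j : Fin n} (hij : i ≤ j)
    (hj : ∀ l, i < l → l ≤ j → u.1 l + m * i < u.1 i + m * l) :
    v.1 j + u.1 i ≤ u.1 j + v.1 i := by
  obtain ⟨a, k, ha, hak, hasc, hprim, hend, hv⟩ := (rotCovBy_iff u.2.1).1 h
  have hle := h.le j
  rw [hv i]
  split_ifs with hi
  · have hjk : j ≤ k := by
      by_contra hjk
      rw [not_le] at hjk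
      have hk : (k : ℕ) + 1 < n := by have := j.2; simp only [Fin.lt_def] at hjk; omega
      have h1 := hend ⟨k + 1, hk⟩ rfl
      have h2 := hj ⟨k + 1, hk⟩ (by rw [Fin.lt_def]; have := hi.2; rw [Fin.le_def] at this; simp; omega)
        (by rw [Fin.le_def]; rw [Fin.lt_def] at hjk; simp; omega)
      rcases eq_or_lt_of_le hi.1 with rfl | hai
      · omega
      · have h3 := hprim i hai hi.2
        omega
    rw [hv j, if_pos ⟨hi.1.trans hij, hjk⟩]
    have h1 := u.2.1 hij
    have h2 : 0 < u.1 i := by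
      refine lt_of_lt_of_le ?_ (u.2.1 hi.1)
      have := hasc ⟨a - 1, by omega⟩ (by simp; omega)
      omega
    omega
  · omega

lemma DyckM.add_le_add {u v : DyckM m n} (h : u ≤ v) {i j : Fin n} (hij : i ≤ j)
    (hj : ∀ l, i < l → l ≤ j → u.1 l + m * i < u.1 i + m * l) :
    v.1 j + u.1 i ≤ u.1 j + v.1 i := by
  suffices H : ∀ l, i ≤ l → l ≤ j → v.1 l + u.1 i ≤ u.1 l + v.1 i from H j hij le_rfl
  induction h with
  | refl => intro l _ _; exact le_rfl
  | @tail b c _ hbc ih =>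
    intro l hil hlj
    have := hbc.add_le_add hil fun l' h1 h2 => by
      have := ih l' h1.le (h2.trans hlj)
      have := hj l' h1 (h2.trans hlj)
      omega
    have := ih l hil hlj
    omega

lemma RotCovBy.ne {u v : DyckM m n} (h : RotCovBy m n u.1 v.1) : u ≠ v := by
  rintro rfl
  obtain ⟨i, k, hi, hik, hasc, -, -, hv⟩ := h
  have := hv i
  rw [if_pos ⟨le_rfl, hik⟩] at this
  have := hasc ⟨i - 1, by omega⟩ (by simp; omega)
  omega

lemma DyckM.exists_rotCovBy_of_lt {u v : DyckM m n} (h : u < v) :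
    ∃ w : DyckM m n, RotCovBy m n u.1 w.1 ∧ w ≤ v := by
  rcases Relation.ReflTransGen.cases_head h.le with h' | ⟨w, h1, h2⟩
  · exact absurd h' h.ne
  · exact ⟨w, h1, h2⟩

lemma RotCovBy.covBy {u v : DyckM m n} (h : RotCovBy m n u.1 v.1) : u ⋖ v := by
  refine ⟨lt_of_le_of_ne h.dyck_le h.ne, fun c huc hcv => ?_⟩
  obtain ⟨w, hw, hwc⟩ := DyckM.exists_rotCovBy_of_lt huc
  have hwv := hwc.trans hcv.le
  suffices w = v from (this ▸ hwc).not_gt hcv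
  obtain ⟨i, k, hi, hik, hasc, hprim, hend, hv⟩ := (rotCovBy_iff u.2.1).1 h
  obtain ⟨i', k', hi', hik', hasc', hprim', hend', hw'⟩ := (rotCovBy_iff u.2.1).1 hw
  have hpos' := hasc' ⟨i' - 1, by omega⟩ (by simp; omega)
  have hle := DyckM.coe_ge hwv
  have h1 := hle i'
  have h2 := hw' i'
  rw [if_pos ⟨le_rfl, hik'⟩] at h2
  have hmem : i ≤ i' ∧ i' ≤ k := by
    by_contra hcon
    rw [hv i', if_neg hcon] at h1
    omega
  have hii : i = i' := by
    by_contra hne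
    have hlt : i < i' := lt_of_le_of_ne hmem.1 hne
    have h3 := DyckM.add_le_add hwv (i := i) (j := i') hmem.1 (fun l hl hl' => by
      have e1 := hprim l hl (hl'.trans hmem.2)
      have e2 := hw.le l
      have e3 := hw' i
      rw [if_neg (by rintro ⟨e, -⟩; exact (e.trans_lt hlt).false)] at e3
      omega)
    have e3 := hw' i
    rw [if_neg (by rintro ⟨e, -⟩; exact (e.trans_lt hlt).false)] at e3
    rw [hv i, hv i', if_pos hmem, if_pos ⟨le_rfl, hik⟩] at h3
    have := hasc ⟨i - 1, by omega⟩ (by simp; omega)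
    omega
  subst hii
  have hkk : k = k' := by
    rcases lt_trichotomy k k' with hlt | heq | hlt
    · have h5 := hend ⟨k + 1, by have := k'.2; rw [Fin.lt_def] at hlt; omega⟩ rfl
      have h6 := hprim' ⟨k + 1, by have := k'.2; rw [Fin.lt_def] at hlt; omega⟩
        (by rw [Fin.lt_def]; rw [Fin.le_def] at hik; simp; omega)
        (by rw [Fin.le_def]; rw [Fin.lt_def] at hlt; simp; omega)
      omega
    · exact heq
    · have h5 := hend' ⟨k' + 1, by have := k.2; rw [Fin.lt_def] at hlt; omega⟩ rfl
      have h6 := hprim ⟨k' + 1, by have := k.2; rw [Fin.lt_def] at hlt; omega⟩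
        (by rw [Fin.lt_def]; rw [Fin.le_def] at hik'; simp; omega)
        (by rw [Fin.le_def]; rw [Fin.lt_def] at hlt; simp; omega)
      omega
  subst hkk
  exact Subtype.ext (funext fun j => by rw [hw' j, hv j])

lemma DyckM.covBy_iff {u v : DyckM m n} : u ⋖ v ↔ RotCovBy m n u.1 v.1 := by
  refine ⟨fun h => ?_, RotCovBy.covBy⟩
  obtain ⟨w, hw, hwv⟩ := DyckM.exists_rotCovBy_of_lt h.lt
  rcases h.eq_or_eq hw.dyck_le hwv with rfl | rfl
  · exact absurd rfl hw.ne
  · exact hw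

lemma exists_run {n : ℕ} (p : Fin n → Prop) (i : Fin n) :
    ∃ k : Fin n, i ≤ k ∧ (∀ j, i < j → j ≤ k → p j) ∧ ∀ j : Fin n, (j : ℕ) = k + 1 → ¬ p j := by
  classical
  obtain ⟨k, hk⟩ := (Set.toFinite {k : Fin n | i ≤ k ∧ ∀ j, i < j → j ≤ k → p j}).exists_maximal
    ⟨i, le_rfl, fun j h h' => absurd (h.trans_le h') (lt_irrefl _)⟩
  refine ⟨k, hk.prop.1, hk.prop.2, fun j hj hpj => ?_⟩
  have hkj : k < j := by rw [Fin.lt_def]; omega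
  refine (hk.le_of_ge (y := j) ⟨hk.prop.1.trans hkj.le, fun l hil hlj => ?_⟩ hkj.le).not_gt hkj
  rcases eq_or_lt_of_le hlj with rfl | hlt
  · exact hpj
  · exact hk.prop.2 l hil (by rw [Fin.le_def]; rw [Fin.lt_def] at hlt; omega)

lemma DyckM.exists_rotCovBy_of_run (u : DyckM m n) (i k : Fin n) (hi : (0 : ℕ) < i) (hik : i ≤ k)
    (hasc : ∀ j : Fin n, (j : ℕ) + 1 = i → u.1 j < u.1 i)
    (hprim : ∀ j, i < j → j ≤ k → u.1 j + m * i < u.1 i + m * j)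
    (hend : ∀ j : Fin n, (j : ℕ) = k + 1 → u.1 i + m * j ≤ u.1 j + m * i) :
    ∃ v : DyckM m n, RotCovBy m n u.1 v.1 ∧
      ∀ j, v.1 j = if i ≤ j ∧ j ≤ k then u.1 j - 1 else u.1 j := by
  have hpos := hasc ⟨i - 1, by omega⟩ (by simp; omega)
  have hmono : Monotone fun j => if i ≤ j ∧ j ≤ k then u.1 j - 1 else u.1 j := by
    intro a b hab
    have := u.2.1 hab
    dsimp only
    split_ifs with h1 h2 h2
    · omega
    · omega
    · have h3 : a < i := by
        by_contra h3
        exact h1 ⟨not_lt.1 h3, hab.trans h2.2⟩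
      have h4 := u.2.1 (show a ≤ ⟨i - 1, by omega⟩ by
        rw [Fin.le_def]; rw [Fin.lt_def] at h3; simp; omega)
      have h5 := u.2.1 h2.1
      omega
    · exact this
  refine ⟨⟨_, hmono, fun j => ?_⟩, (rotCovBy_iff u.2.1).2 ⟨i, k, hi, hik, hasc, hprim,
    hend, fun j => rfl⟩, fun j => rfl⟩
  have := u.2.2 j
  split_ifs <;> omega

lemma DyckM.exists_rotCovBy (u : DyckM m n) (i : Fin n) (hi : (0 : ℕ) < i)
    (hasc : ∀ j : Fin n, (j : ℕ) + 1 = i → u.1 j < u.1 i) :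
    ∃ v : DyckM m n, RotCovBy m n u.1 v.1 ∧ (∀ j < i, v.1 j = u.1 j) ∧ v.1 i < u.1 i := by
  obtain ⟨k, hik, hprim, hend⟩ := exists_run (fun j => u.1 j + m * i < u.1 i + m * j) i
  obtain ⟨v, hv, hvj⟩ := u.exists_rotCovBy_of_run i k hi hik hasc hprim
    fun j hj => not_lt.1 (hend j hj)
  have hpos := hasc ⟨i - 1, by omega⟩ (by simp; omega)
  refine ⟨v, hv, fun j hj => ?_, ?_⟩
  · rw [hvj, if_neg fun h => (hj.trans_le h.1).false]
  · rw [hvj, if_pos ⟨le_rfl, hik⟩]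
    omega

/-- A lower cover, from a position whose first later position of at most its deficit `m * j - u j`
has strictly smaller deficit. -/
lemma DyckM.exists_rotCovBy' (v : DyckM m n) (i k : Fin n) (hi : v.1 i < m * i) (hik : i ≤ k)
    (hprim : ∀ j, i < j → j ≤ k → v.1 j + m * i < v.1 i + m * j)
    (hend : ∀ j : Fin n, (j : ℕ) = k + 1 → v.1 i + m * j < v.1 j + m * i) :
    ∃ u : DyckM m n, RotCovBy m n u.1 v.1 ∧ (∀ j < i, u.1 j = v.1 j) ∧ v.1 i < u.1 i := by
  have hmono : Monotone fun j => if i ≤ j ∧ j ≤ k then v.1 j + 1 else v.1 j := by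
    intro a b hab
    have := v.2.1 hab
    dsimp only
    split_ifs with h1 h2 h2
    · omega
    · have hkb : k < b := by
        by_contra h3
        exact h2 ⟨h1.1.trans hab, not_lt.1 h3⟩
      have hk : (k : ℕ) + 1 < n := by have := b.2; rw [Fin.lt_def] at hkb; omega
      have e1 := hend ⟨k + 1, hk⟩ rfl
      have e2 := v.2.1 (show ⟨k + 1, hk⟩ ≤ b by rw [Fin.le_def]; rw [Fin.lt_def] at hkb; simp; omega)
      have e4 : m * (a : ℕ) ≤ m * (k + 1) :=
        Nat.mul_le_mul_left _ (by have := h1.2; rw [Fin.le_def] at this; omega)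
      rcases eq_or_lt_of_le h1.1 with rfl | hia
      · simp only at e1
        omega
      · have e3 := hprim a hia h1.2
        simp only at e1
        omega
    · omega
    · exact this
  have hi0 : (0 : ℕ) < i := by
    by_contra h
    have : (i : ℕ) = 0 := by omega
    rw [this] at hi
    omega
  refine ⟨⟨_, hmono, fun j => ?_⟩, (rotCovBy_iff hmono).2 ⟨i, k, hi0, hik, fun j hj => ?_,
    fun j hj hj' => ?_, fun j hj => ?_, fun j => ?_⟩, fun j hj => ?_, ?_⟩
  · have := v.2.2 j
    split_ifs with h
    · rcases eq_or_lt_of_le h.1 with rfl | hia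
      · omega
      · have := hprim j hia h.2
        omega
    · exact this
  · rw [if_neg (by rintro ⟨h, -⟩; rw [Fin.le_def] at h; omega), if_pos ⟨le_rfl, hik⟩]
    have := v.2.1 (show j ≤ i by rw [Fin.le_def]; omega)
    omega
  · have := hprim j hj hj'
    rw [if_pos ⟨hj.le, hj'⟩, if_pos ⟨le_rfl, hik⟩]
    omega
  · have := hend j hj
    rw [if_pos ⟨le_rfl, hik⟩, if_neg (by rintro ⟨-, h⟩; rw [Fin.le_def] at h; omega)]
    omega
  · split_ifs <;> simp
  · exact if_neg fun h => (hj.trans_le h.1).false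
  · simp [hik]

end Tamari

section MeetIrreducibles

variable {m n : ℕ}

/-- The path with step sequence `(0, …, 0, c, …, c)`, where `c` starts at position `i`. -/
def rectPath (m n i c : ℕ) : DyckM m n :=
  ⟨fun j => if (j : ℕ) < i then 0 else min c (m * i), fun a b hab => by
    rw [Fin.le_def] at hab
    dsimp only
    split_ifs <;> omega, fun j => by
    dsimp only
    split_ifs with h
    · omega
    · exact (min_le_right _ _).trans (Nat.mul_le_mul_left _ (not_lt.1 h))⟩

lemma rectPath_apply (i c : ℕ) (hc : c ≤ m * i) (j : Fin n) :
    (rectPath m n i c).1 j = if (j : ℕ) < i then 0 else c := by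
  simp [rectPath, hc]

lemma rectPath_rot {i c : ℕ} (hc : c ≤ m * i) {v : DyckM m n}
    (h : RotCovBy m n (rectPath m n i c).1 v.1) : 0 < c ∧ v = rectPath m n i (c - 1) := by
  obtain ⟨a, k, ha, hak, hasc, hprim, hend, hv⟩ := (rotCovBy_iff (rectPath m n i c).2.1).1 h
  have h1 := hasc ⟨a - 1, by omega⟩ (by simp; omega)
  rw [rectPath_apply _ _ hc, rectPath_apply _ _ hc] at h1
  simp only at h1
  have hai : (a : ℕ) = i ∧ 0 < c := by
    split_ifs at h1 <;> omega
  have hk : (k : ℕ) + 1 = n := by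
    by_contra hk
    have hk' : (k : ℕ) + 1 < n := by omega
    have h2 := hend ⟨k + 1, hk'⟩ rfl
    rw [Fin.le_def] at hak
    rw [rectPath_apply _ _ hc, rectPath_apply _ _ hc, if_neg (by omega),
      if_neg (by simp; omega)] at h2
    have hm : 0 < m := by
      by_contra hm
      have : m = 0 := by omega
      rw [this] at hc
      omega
    have h3 : m * (a : ℕ) < m * (k + 1) := Nat.mul_lt_mul_of_pos_left (by omega) hm
    simp only at h2
    omega
  refine ⟨hai.2, Subtype.ext (funext fun j => ?_)⟩
  rw [hv j, rectPath_apply _ _ hc, rectPath_apply _ _ (by omega)]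
  simp only [Fin.le_def]
  have := j.2
  split_ifs <;> omega

lemma rectPath_covBy {i c : ℕ} (hi : 0 < i) (hin : i < n) (hc0 : 0 < c) (hc : c ≤ m * i) :
    rectPath m n i c ⋖ rectPath m n i (c - 1) := by
  obtain ⟨v, hv, -⟩ := (rectPath m n i c).exists_rotCovBy ⟨i, hin⟩ hi fun j hj => by
    rw [rectPath_apply _ _ hc, rectPath_apply _ _ hc]
    simp only at hj
    simp [← hj, hc0]
  rw [← (rectPath_rot hc hv).2]
  exact hv.covBy

lemma covBy_rectPath_iff {i c : ℕ} (hi : 0 < i) (hin : i < n) (hc0 : 0 < c) (hc : c ≤ m * i)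
    {v : DyckM m n} : rectPath m n i c ⋖ v ↔ v = rectPath m n i (c - 1) :=
  ⟨fun h => (rectPath_rot hc (DyckM.covBy_iff.1 h)).2,
    fun h => h ▸ rectPath_covBy hi hin hc0 hc⟩

lemma rectPath_le {i c c' : ℕ} (hi : 0 < i) (hin : i < n) (hc : c ≤ m * i) (h : c' ≤ c) :
    rectPath m n i c ≤ rectPath m n i c' := by
  induction c, h using Nat.le_induction with
  | base => exact le_rfl
  | succ c hcc ih =>
    exact (rectPath_covBy hi hin (Nat.succ_pos c) hc).le.trans (ih (by omega))

lemma exists_eq_of_rectPath_le {i c : ℕ} (hc : c ≤ m * i) {v : DyckM m n}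
    (h : rectPath m n i c ≤ v) : ∃ c' ≤ c, v = rectPath m n i c' := by
  induction h with
  | refl => exact ⟨c, le_rfl, rfl⟩
  | tail _ h ih =>
    obtain ⟨c', hcc, rfl⟩ := ih
    exact ⟨c' - 1, by omega, (rectPath_rot (by omega) h).2⟩

lemma rectPath_le_iff {i i' c c' : ℕ} (hi : 0 < i) (hin : i < n) (hin' : i' < n)
    (hc : c ≤ m * i) (hc' : c' ≤ m * i') :
    rectPath m n i c ≤ rectPath m n i' c' ↔ c' = 0 ∨ i = i' ∧ c' ≤ c := by
  constructor
  · intro h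
    obtain ⟨d, hd, h⟩ := exists_eq_of_rectPath_le hc h
    have h1 := congrFun (congrArg Subtype.val h) ⟨i, hin⟩
    have h2 := congrFun (congrArg Subtype.val h) ⟨i', hin'⟩
    rw [rectPath_apply _ _ hc', rectPath_apply _ _ (hd.trans hc)] at h1 h2
    simp only [lt_irrefl, if_false] at h1 h2
    split_ifs at h1 h2 <;> omega
  · rintro (rfl | ⟨rfl, h⟩)
    · have : rectPath m n i' 0 = rectPath m n i 0 := Subtype.ext (by
        funext j
        rw [rectPath_apply _ _ (by omega), rectPath_apply _ _ (by omega)]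
        simp)
      rw [this]
      exact rectPath_le hi hin hc (Nat.zero_le _)
    · exact rectPath_le hi hin hc h

lemma DyckM.exists_ascent {u : DyckM m n} (h : ∃ j, u.1 j ≠ 0) :
    ∃ i : Fin n, (0 : ℕ) < i ∧ 0 < u.1 i ∧ ∀ j < i, u.1 j = 0 := by
  obtain ⟨i, hi⟩ := (Set.toFinite {j | u.1 j ≠ 0}).exists_minimal h
  refine ⟨i, ?_, Nat.pos_of_ne_zero hi.prop, fun j hj => ?_⟩
  · by_contra h0
    exact hi.prop (u.val_zero (by omega))
  · by_contra hne
    exact (hi.le_of_le hne hj.le).not_gt hj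

instance : OrderTop (DyckM m n) where
  top := rectPath m n 0 0
  le_top u := by
    obtain ⟨v, huv, hv⟩ := (Set.toFinite (Set.univ : Set (DyckM m n))).exists_le_maximal
      (Set.mem_univ u)
    suffices v = rectPath m n 0 0 from this ▸ huv
    refine Subtype.ext (funext fun j => ?_)
    rw [rectPath_apply _ _ (by omega)]
    simp only [ite_self]
    by_contra hne
    obtain ⟨i, hi, hpos, hz⟩ := DyckM.exists_ascent ⟨j, hne⟩
    obtain ⟨w, hw, -⟩ := v.exists_rotCovBy i hi fun l hl => by
      rw [hz l (by rw [Fin.lt_def]; omega)]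
      exact hpos
    exact hv.not_gt (Set.mem_univ w) hw.covBy.lt

lemma rectPath_zero (i : ℕ) : rectPath m n i 0 = ⊤ := by
  refine Subtype.ext (funext fun j => ?_)
  change _ = (rectPath m n 0 0).1 j
  rw [rectPath_apply _ _ (by omega), rectPath_apply _ _ (by omega)]
  simp

lemma DyckM.existsUnique_covBy_iff {u : DyckM m n} : (∃! v, u ⋖ v) ↔
    ∃ i c, 0 < i ∧ i < n ∧ 0 < c ∧ c ≤ m * i ∧ u = rectPath m n i c := by
  constructor
  · intro h
    obtain ⟨w, hw⟩ := h.exists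
    have hne : ∃ j, u.1 j ≠ 0 := by
      by_contra hcon
      push Not at hcon
      refine hw.lt.not_ge (le_of_eq (Subtype.ext (funext fun j => ?_)))
      have := DyckM.coe_ge hw.le j
      rw [hcon j] at this ⊢
      omega
    obtain ⟨i, hi, hpos, hz⟩ := DyckM.exists_ascent hne
    have hc : u.1 i ≤ m * i := u.2.2 i
    obtain ⟨v, hv, -, hvi⟩ := u.exists_rotCovBy i hi fun l hl => by
      rw [hz l (by rw [Fin.lt_def]; omega)]
      exact hpos
    refine ⟨i, u.1 i, hi, i.2, hpos, hc, Subtype.ext (funext fun j => ?_)⟩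
    rw [rectPath_apply _ _ hc]
    split_ifs with hj
    · exact hz j hj
    · obtain ⟨j, hjn⟩ := j
      simp only [not_lt] at hj
      induction j, hj using Nat.le_induction with
      | base => rfl
      | succ j hij ih =>
        rw [← ih (by omega)]
        by_contra hne
        obtain ⟨v', hv', heq, -⟩ := u.exists_rotCovBy ⟨j + 1, hjn⟩ (Nat.succ_pos j) fun l hl => by
          rw [show l = ⟨j, by omega⟩ from Fin.ext (by simpa using hl)]
          exact lt_of_le_of_ne (u.2.1 (by simp)) (Ne.symm hne)
        obtain rfl := h.unique hv.covBy hv'.covBy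
        have := heq i (by rw [Fin.lt_def]; simp; omega)
        omega
  · rintro ⟨i, c, hi, hin, hc0, hc, rfl⟩
    exact ⟨_, rectPath_covBy hi hin hc0 hc, fun y hy => (covBy_rectPath_iff hi hin hc0 hc).1 hy⟩

end MeetIrreducibles

section JoinIrreducibles

variable {m n : ℕ}

/-- The path obtained from the minimal path by lowering the entries at positions `i, …, k` by
`s ≤ m`. -/
def blockPath (m n i k s : ℕ) : DyckM m n :=
  ⟨fun j => if i ≤ (j : ℕ) ∧ (j : ℕ) ≤ k then m * j - min s m else m * j, fun a b hab => by
    rcases eq_or_lt_of_le hab with rfl | hlt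
    · exact le_rfl
    have h : m * ((a : ℕ) + 1) ≤ m * b := Nat.mul_le_mul_left _ hlt
    rw [Nat.mul_add] at h
    dsimp only
    split_ifs <;> omega, fun j => by
    dsimp only
    split_ifs <;> omega⟩

lemma blockPath_apply (i k s : ℕ) (hs : s ≤ m) (j : Fin n) :
    (blockPath m n i k s).1 j = if i ≤ (j : ℕ) ∧ (j : ℕ) ≤ k then m * j - s else m * j := by
  simp [blockPath, hs]

lemma le_mul_of_pos {m s i : ℕ} (hs : s ≤ m) (hi : 0 < i) : s ≤ m * i :=
  hs.trans (Nat.le_mul_of_pos_right m hi)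

lemma DyckM.exists_last_lt {v : DyckM m n} (h : ∃ j, v.1 j < m * (j : ℕ)) :
    ∃ k : Fin n, v.1 k < m * (k : ℕ) ∧ (∀ j, k < j → v.1 j = m * (j : ℕ)) ∧
      ∃ u : DyckM m n, RotCovBy m n u.1 v.1 ∧ (∀ j < k, u.1 j = v.1 j) ∧ v.1 k < u.1 k := by
  obtain ⟨k, hk⟩ := (Set.toFinite {j | v.1 j < m * (j : ℕ)}).exists_maximal h
  have hlast : ∀ j, k < j → v.1 j = m * (j : ℕ) := fun j hj => by
    by_contra hne
    exact (hk.le_of_ge (lt_of_le_of_ne (v.2.2 j) hne) hj.le).not_gt hj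
  have hlt : v.1 k < m * (k : ℕ) := hk.prop
  refine ⟨k, hlt, hlast, v.exists_rotCovBy' k k hlt le_rfl (fun j h1 h2 => ?_) fun j hj => ?_⟩
  · exact absurd (h1.trans_le h2) (lt_irrefl _)
  · rw [hlast j (by rw [Fin.lt_def]; omega)]
    omega

instance : OrderBot (DyckM m n) where
  bot := blockPath m n 0 n 0
  bot_le u := by
    obtain ⟨v, hvu, hv⟩ := (Set.toFinite (Set.univ : Set (DyckM m n))).exists_le_minimal
      (Set.mem_univ u)
    suffices v = blockPath m n 0 n 0 from this ▸ hvu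
    refine Subtype.ext (funext fun j => ?_)
    rw [blockPath_apply _ _ _ (by omega)]
    simp only [Nat.sub_zero, ite_self]
    by_contra hne
    obtain ⟨k, -, -, w, hw, -⟩ := DyckM.exists_last_lt ⟨j, lt_of_le_of_ne (v.2.2 j) hne⟩
    exact hv.not_lt (Set.mem_univ w) hw.covBy.lt

lemma DyckM.bot_apply (j : Fin n) : (⊥ : DyckM m n).1 j = m * j := by
  change (blockPath m n 0 n 0).1 j = _
  rw [blockPath_apply _ _ _ (by omega)]
  simp

lemma DyckM.existsUnique_covBy_blockPath {i k s : ℕ} (hi : 0 < i) (hik : i ≤ k) (hkn : k < n)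
    (hs0 : 0 < s) (hs : s ≤ m) : ∃! u, u ⋖ blockPath m n i k s := by
  set v := blockPath m n i k s with hvdef
  have hv : ∀ j : Fin n, v.1 j = if i ≤ (j : ℕ) ∧ (j : ℕ) ≤ k then m * j - s else m * j :=
    blockPath_apply i k s hs
  have hval : ∀ u : DyckM m n, RotCovBy m n u.1 v.1 →
      ∀ j : Fin n, u.1 j = if (j : ℕ) = k then v.1 j + 1 else v.1 j := by
    intro u hu
    obtain ⟨a, b, ha, hab, hasc, hprim, hend, h⟩ := (rotCovBy_iff u.2.1).1 hu
    have hpos := hasc ⟨a - 1, by omega⟩ (by simp; omega)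
    have hva := h a
    rw [if_pos ⟨le_rfl, hab⟩] at hva
    have hua := u.2.2 a
    have hmem : i ≤ (a : ℕ) ∧ (a : ℕ) ≤ k := by
      by_contra hcon
      rw [hv, if_neg hcon] at hva
      omega
    have hsa := le_mul_of_pos hs ha
    have hak : (a : ℕ) = k := by
      by_contra hne
      have han : (a : ℕ) + 1 < n := by omega
      have h1 := hv ⟨a + 1, han⟩
      rw [if_pos (by simp; omega)] at h1
      have h2 := h ⟨a + 1, han⟩
      rw [hv, if_pos hmem] at hva
      have hma := Nat.mul_add m a 1
      simp only at h1
      by_cases hb : b = a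
      · subst hb
        have h3 := hend ⟨b + 1, han⟩ rfl
        rw [if_neg (by simp [Fin.le_def])] at h2
        simp only at h3
        omega
      · have hb' : (a : ℕ) + 1 ≤ b := by
          have : (a : ℕ) ≠ b := fun h => hb (Fin.ext h.symm)
          rw [Fin.le_def] at hab
          omega
        have h3 := hprim ⟨a + 1, han⟩ (by simp [Fin.lt_def]) (by simpa [Fin.le_def] using hb')
        rw [if_pos (by simpa [Fin.le_def] using hb')] at h2
        simp only at h3
        omega
    have hba : b = a := by
      by_contra hb
      have hb' : (a : ℕ) + 1 ≤ b := by
        have : (a : ℕ) ≠ b := fun h => hb (Fin.ext h.symm)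
        rw [Fin.le_def] at hab
        omega
      have han : (a : ℕ) + 1 < n := by omega
      have h1 := hv ⟨a + 1, han⟩
      rw [if_neg (by simp; omega)] at h1
      have h2 := h ⟨a + 1, han⟩
      rw [if_pos (by simpa [Fin.le_def] using hb')] at h2
      have h3 := u.2.2 ⟨a + 1, han⟩
      have := Nat.mul_add m a 1
      simp only at h1 h3
      omega
    subst hba
    intro j
    have hj := h j
    simp only [Fin.le_def] at hj
    split_ifs with hjk
    · rw [if_pos (by omega)] at hj
      have : j = b := Fin.ext (by omega)
      subst this
      omega
    · rw [if_neg (by omega)] at hj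
      exact hj.symm
  have hsk := le_mul_of_pos hs (hi.trans_le hik)
  have hex : ∃ j : Fin n, v.1 j < m * (j : ℕ) := ⟨⟨k, hkn⟩, by
    rw [hv, if_pos (by simp [hik])]
    simp only
    omega⟩
  obtain ⟨-, -, -, u, hu, -⟩ := DyckM.exists_last_lt hex
  refine ⟨u, hu.covBy, fun u' hu' => Subtype.ext (funext fun j => ?_)⟩
  rw [hval u hu, hval u' (DyckM.covBy_iff.1 hu')]

lemma DyckM.existsUnique_covBy_iff' {v : DyckM m n} : (∃! u, u ⋖ v) ↔
    ∃ i k s, 0 < i ∧ i ≤ k ∧ k < n ∧ 0 < s ∧ s ≤ m ∧ v = blockPath m n i k s := by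
  constructor
  · intro h
    obtain ⟨w, hw⟩ := h.exists
    have hne : ∃ j, v.1 j < m * (j : ℕ) := by
      by_contra hcon
      push Not at hcon
      refine hw.lt.not_ge (le_of_eq (Subtype.ext (funext fun j => ?_)))
      have := DyckM.coe_ge hw.le j
      have := hcon j
      have := w.2.2 j
      omega
    obtain ⟨k, hk, hlast, u, hu, huk, -⟩ := DyckM.exists_last_lt hne
    have hconst : ∀ d, ∀ j : Fin n, (j : ℕ) + d = k → v.1 j < m * (j : ℕ) →
        ∀ l, j ≤ l → l ≤ k → v.1 l + m * j = v.1 j + m * l := by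
      intro d
      induction d using Nat.strong_induction_on with
      | _ d ih =>
        intro j hjd hj l hjl hlk
        rcases Nat.eq_zero_or_pos d with rfl | hd
        · have : l = j := by rw [Fin.le_def] at hjl hlk; exact Fin.ext (by omega)
          rw [this]
        obtain ⟨b, hjb, hprim, hend⟩ :=
          exists_run (fun a => v.1 a + m * j < v.1 j + m * a) j
        have hnot : ∃ a : Fin n, (a : ℕ) = b + 1 ∧ v.1 a + m * j = v.1 j + m * a := by
          by_contra hcon
          push Not at hcon
          obtain ⟨u', hu', -, hlt⟩ := v.exists_rotCovBy' j b hj hjb hprim fun a ha => by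
            have h1 := hcon a ha
            have h2 := hend a ha
            omega
          obtain rfl := h.unique hu.covBy hu'.covBy
          have := huk j (by rw [Fin.lt_def]; omega)
          omega
        obtain ⟨a, hab, ha⟩ := hnot
        rw [Fin.le_def] at hjb
        have hak : (a : ℕ) ≤ k := by
          by_contra hcon
          have := hlast a (by rw [Fin.lt_def]; omega)
          omega
        have hbj : b = j := by
          by_contra hbj
          have hbj' : (j : ℕ) ≠ b := fun h => hbj (Fin.ext h.symm)
          have h1 := hprim ⟨j + 1, by omega⟩ (by simp [Fin.lt_def])
            (by simp only [Fin.le_def]; omega)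
          have h2 := ih (d - 1) (by omega) ⟨j + 1, by omega⟩ (by simp only; omega)
            (by simp only at h1 ⊢; omega) a (by simp only [Fin.le_def]; omega)
            (by simp only [Fin.le_def]; omega)
          simp only at h1 h2
          omega
        subst hbj
        rcases eq_or_lt_of_le hjl with rfl | hlt
        · rfl
        · have h2 := ih (d - 1) (by omega) a (by omega) (by omega) l
            (by rw [Fin.lt_def] at hlt; rw [Fin.le_def]; omega) hlk
          omega
    obtain ⟨i, hi⟩ := (Set.toFinite {j | v.1 j < m * (j : ℕ)}).exists_minimal hne
    have hilt : v.1 i < m * (i : ℕ) := hi.prop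
    have hfirst : ∀ j, j < i → v.1 j = m * (j : ℕ) := fun j hj => by
      by_contra hne
      exact (hi.le_of_le (lt_of_le_of_ne (v.2.2 j) hne) hj.le).not_gt hj
    have hik : i ≤ k := by
      by_contra hcon
      have := hlast i (not_le.1 hcon)
      omega
    have hi0 : 0 < (i : ℕ) := by
      by_contra h0
      have : (i : ℕ) = 0 := by omega
      rw [this] at hilt
      omega
    have hsm : m * (i : ℕ) - v.1 i ≤ m := by
      have h1 := hfirst ⟨i - 1, by omega⟩ (by rw [Fin.lt_def]; simp only; omega)
      have h2 := v.2.1 (show (⟨i - 1, by omega⟩ : Fin n) ≤ i by simp only [Fin.le_def]; omega)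
      have h3 := Nat.mul_add m (i - 1) 1
      rw [Nat.sub_add_cancel hi0] at h3
      simp only at h1
      omega
    refine ⟨i, k, m * i - v.1 i, hi0, hik, k.2, by omega, hsm,
      Subtype.ext (funext fun j => ?_)⟩
    rw [blockPath_apply _ _ _ hsm]
    split_ifs with hj
    · have := hconst (k - i) i (by rw [Fin.le_def] at hik; omega) hilt j hj.1 hj.2
      omega
    · by_cases hji : j < i
      · exact hfirst j hji
      · exact hlast j (by rw [Fin.lt_def] at *; omega)
  · rintro ⟨i, k, s, hi, hik, hkn, hs0, hs, rfl⟩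
    exact DyckM.existsUnique_covBy_blockPath hi hik hkn hs0 hs

lemma blockPath_le {i k k' s s' : ℕ} (hi : 0 < i) (hk : k ≤ k') (hs : s ≤ s') (hs' : s' ≤ m) :
    blockPath m n i k s ≤ blockPath m n i k' s' := by
  set v := blockPath m n i k' s' with hvdef
  have hv : ∀ j : Fin n, v.1 j = if i ≤ (j : ℕ) ∧ (j : ℕ) ≤ k' then m * j - s' else m * j :=
    blockPath_apply i k' s' hs'
  have hu := blockPath_apply (n := n) i k s (hs.trans hs')
  obtain ⟨w, huw, hw⟩ := (Set.toFinite {w : DyckM m n | blockPath m n i k s ≤ w ∧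
    (∀ j, v.1 j ≤ w.1 j) ∧ ∀ j j' : Fin n, i ≤ (j : ℕ) → (j' : ℕ) = j + 1 →
      w.1 j + m ≤ w.1 j'}).exists_le_maximal (a := blockPath m n i k s) (by
      refine ⟨le_rfl, fun j => ?_, fun j j' hij hj' => ?_⟩
      · rw [hv, hu]
        split_ifs <;> omega
      · have := le_mul_of_pos (hs.trans hs') (hi.trans_le hij)
        have h1 := Nat.mul_add m j 1
        rw [hu, hu, hj']
        split_ifs <;> omega)
  obtain ⟨h1, hge, hstep⟩ := hw.prop
  suffices w = v from this ▸ huw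
  by_contra hne
  have hex : ∃ j, v.1 j < w.1 j := by
    by_contra hcon
    push Not at hcon
    exact hne (Subtype.ext (funext fun j => (hcon j).antisymm (hge j)))
  obtain ⟨j, hj⟩ := (Set.toFinite {j | v.1 j < w.1 j}).exists_minimal hex
  have hlt : v.1 j < w.1 j := hj.prop
  have hfirst : ∀ l, l < j → w.1 l = v.1 l := fun l hl => by
    by_contra hne
    exact (hj.le_of_le (lt_of_le_of_ne (hge l) (Ne.symm hne)) hl.le).not_gt hl
  have hij : i ≤ (j : ℕ) ∧ (j : ℕ) ≤ k' := by
    by_contra hcon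
    have := w.2.2 j
    rw [hv, if_neg hcon] at hlt
    omega
  have hprev : ∀ l : Fin n, (l : ℕ) + 1 = j → w.1 l ≤ v.1 j ∧ (i ≤ (l : ℕ) → w.1 l + m ≤ v.1 j) := by
    intro l hl
    have := le_mul_of_pos hs' (hi.trans_le hij.1)
    have h2 := Nat.mul_add m l 1
    rw [hfirst l (by rw [Fin.lt_def]; omega), hv, hv, if_pos hij, ← hl]
    refine ⟨?_, fun hil => ?_⟩
    · split_ifs <;> omega
    · have := le_mul_of_pos hs' (hi.trans_le hil)
      rw [if_pos (by omega)]
      omega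
  obtain ⟨w', hw', hval⟩ := w.exists_rotCovBy_of_run j j (hi.trans_le hij.1) le_rfl
    (fun l hl => (hprev l hl).1.trans_lt hlt)
    (fun l h1 h2 => absurd (h1.trans_le h2) (lt_irrefl _)) fun l hl => by
      have h1 := hstep j l hij.1 hl
      have h2 := Nat.mul_add m j 1
      rw [hl]
      omega
  refine hw.not_gt ⟨h1.trans hw'.dyck_le, fun l => ?_, fun l l' hil hl' => ?_⟩ hw'.covBy.lt
  · rw [hval]
    split_ifs with h
    · obtain rfl := le_antisymm h.2 h.1
      omega
    · exact hge l
  · have h1 := hstep l l' hil hl'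
    rw [hval, hval]
    split_ifs with h h' h'
    · omega
    · omega
    · obtain rfl := le_antisymm h'.2 h'.1
      have := (hprev l hl'.symm).2 hil
      omega
    · exact h1

lemma blockPath_le_iff {i k s i' k' s' : ℕ} (hi : 0 < i) (hi' : 0 < i') (hik : i ≤ k) (hkn : k < n)
    (hs0 : 0 < s) (hs : s ≤ m) (hs' : s' ≤ m) :
    blockPath m n i k s ≤ blockPath m n i' k' s' ↔ i = i' ∧ k ≤ k' ∧ s ≤ s' := by
  constructor
  · intro h
    have hu := blockPath_apply (n := n) i k s hs
    have hv := blockPath_apply (n := n) i' k' s' hs'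
    have hsi := le_mul_of_pos hs hi
    have hsk := le_mul_of_pos hs (hi.trans_le hik)
    have h1 := DyckM.coe_ge h ⟨i, by omega⟩
    rw [hu, hv] at h1
    simp only [le_refl, hik, true_and, if_true] at h1
    have h2 := DyckM.coe_ge h ⟨k, hkn⟩
    rw [hu, hv] at h2
    simp only [le_refl, hik, if_true, and_true] at h2
    have h3 : i' ≤ i ∧ i ≤ k' ∧ s ≤ s' := by
      split_ifs at h1 <;> omega
    have h4 : k ≤ k' := by
      split_ifs at h2 <;> omega
    refine ⟨?_, h4, h3.2.2⟩
    by_contra hne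
    have hi1 := Nat.mul_add m (i - 1) 1
    rw [Nat.sub_add_cancel hi] at hi1
    have key := DyckM.add_le_add h (i := ⟨i - 1, by omega⟩) (j := ⟨i, by omega⟩)
      (by simp [Fin.le_def]) fun l hl hl' => by
        have : (l : ℕ) = i := by
          rw [Fin.lt_def] at hl
          rw [Fin.le_def] at hl'
          simp only at hl hl'
          omega
        rw [hu, hu, this]
        rw [if_pos (by omega), if_neg (by simp only; omega)]
        simp only
        omega
    rw [hu, hu, hv, hv, if_pos (by simp only; omega), if_neg (by simp only; omega),
      if_pos (by simp only; omega), if_pos (by simp only; omega)] at key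
    simp only at key
    have : s' ≤ m * (i - 1) := le_mul_of_pos hs' (by omega)
    omega
  · rintro ⟨rfl, hk, h⟩
    exact blockPath_le hi hk h hs'

end JoinIrreducibles

section CoverPoset

variable {P : Type*} {m : ℕ}

/-- The tuple `(x, …, x, y, …, y)` with `a` copies of `x`. -/
def pairTuple (m a : ℕ) (x y : P) : Fin m → P :=
  fun i => if (i : ℕ) < a then x else y

variable [PartialOrder P]

lemma lt_of_le_of_apply_ne {f g : Fin m → P} (h : f ≤ g) (i : Fin m) (hi : f i ≠ g i) : f < g :=
  lt_of_le_of_ne h fun heq => hi (congrFun heq i)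

lemma exists_tuple_between_of_existsUnique_covBy [Finite P] {Q : (Fin m → P) → Prop}
    {f : {f : Fin m → P // Q f}} (hf : ∃! g, f ⋖ g)
    {z w : Fin m → P} (hz : Q z) (hw : Q w) (hfz : f.1 < z) (hfw : f.1 < w) :
    ∃ t, Q t ∧ f.1 < t ∧ t ≤ z ∧ t ≤ w := by
  obtain ⟨t, h1, h2, h3⟩ := exists_lt_le_le_of_existsUnique hf (z := ⟨z, hz⟩) (w := ⟨w, hw⟩) hfz hfw
  exact ⟨t.1, t.2, h1, h2, h3⟩

lemma exists_tuple_between_of_existsUnique_covBy' [Finite P] {Q : (Fin m → P) → Prop}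
    {f : {f : Fin m → P // Q f}} (hf : ∃! g, g ⋖ f)
    {z w : Fin m → P} (hz : Q z) (hw : Q w) (hfz : z < f.1) (hfw : w < f.1) :
    ∃ t, Q t ∧ t < f.1 ∧ z ≤ t ∧ w ≤ t := by
  obtain ⟨t, h1, h2, h3⟩ := exists_gt_le_le_of_existsUnique hf (z := ⟨z, hz⟩) (w := ⟨w, hw⟩) hfz hfw
  exact ⟨t.1, t.2, h1, h2, h3⟩

/-- Covers of a meet-irreducible tuple cannot change disjoint sets of coordinates. -/
lemma not_disjoint_support_of_existsUnique_covBy [Finite P] {Q : (Fin m → P) → Prop}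
    {f : {f : Fin m → P // Q f}} (hf : ∃! g, f ⋖ g)
    {z w : Fin m → P} (hz : Q z) (hw : Q w) (hfz : f.1 < z) (hfw : f.1 < w) :
    ¬ ∀ i, z i = f.1 i ∨ w i = f.1 i := by
  intro h
  obtain ⟨t, -, hft, htz, htw⟩ := exists_tuple_between_of_existsUnique_covBy hf hz hw hfz hfw
  refine hft.not_ge fun i => ?_
  rcases h i with h | h
  · exact h ▸ htz i
  · exact h ▸ htw i

lemma not_disjoint_support_of_existsUnique_covBy' [Finite P] {Q : (Fin m → P) → Prop}
    {f : {f : Fin m → P // Q f}} (hf : ∃! g, g ⋖ f)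
    {z w : Fin m → P} (hz : Q z) (hw : Q w) (hfz : z < f.1) (hfw : w < f.1) :
    ¬ ∀ i, z i = f.1 i ∨ w i = f.1 i := by
  intro h
  obtain ⟨t, -, hft, htz, htw⟩ := exists_tuple_between_of_existsUnique_covBy' hf hz hw hfz hfw
  refine hft.not_ge fun i => ?_
  rcases h i with h | h
  · exact h ▸ htz i
  · exact h ▸ htw i

variable [OrderBot P]

/-- The tuple `(⊥, …, ⊥, p, …, p, q, …, q)` with `a` copies of `⊥` and `b` copies of `p`. -/
def tripleTuple (m a b : ℕ) (p q : P) : Fin m → P :=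
  fun i => if (i : ℕ) < a then ⊥ else if (i : ℕ) < a + b then p else q

/-- The tuples which are elements of the `m`-cover poset of `P`. -/
def IsCoverTuple (f : Fin m → P) : Prop :=
  ∃ a b p q, a + b ≤ m ∧ p ⋖ q ∧ f = tripleTuple m a b p q

lemma isCoverTuple_pairTuple {a : ℕ} (ha : a ≤ m) {p q : P} (h : p ⋖ q) :
    IsCoverTuple (pairTuple m a p q) :=
  ⟨0, a, p, q, by omega, h, by funext i; simp [tripleTuple, pairTuple]⟩

lemma isCoverTuple_tripleTuple {a b : ℕ} (hab : a + b ≤ m) {p q : P} (h : p ⋖ q) :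
    IsCoverTuple (tripleTuple m a b p q) :=
  ⟨a, b, p, q, hab, h, rfl⟩

lemma isCoverTuple_pairTuple_bot [Finite P] [Nontrivial P] {a : ℕ} (ha : a ≤ m) (p : P) :
    IsCoverTuple (pairTuple m a ⊥ p) := by
  by_cases hp : p = ⊥
  · obtain ⟨x, hx⟩ := exists_ne (⊥ : P)
    obtain ⟨y, hy, -⟩ := exists_covBy_le_of_lt_of_finite (bot_lt_iff_ne_bot.2 hx)
    refine ⟨m, 0, ⊥, y, by omega, hy, ?_⟩
    funext i
    simp [tripleTuple, pairTuple, hp]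
  · obtain ⟨y, hy, -⟩ := exists_le_covBy_of_lt_of_finite (bot_lt_iff_ne_bot.2 hp)
    refine ⟨a, 0, y, p, by omega, hy, ?_⟩
    funext i
    simp only [tripleTuple, pairTuple]
    split_ifs <;> first | rfl | omega

lemma IsCoverTuple.eq_or_covBy {f : Fin m → P} (hf : IsCoverTuple f) {i j : Fin m} (hij : i ≤ j) :
    f i = ⊥ ∨ f i = f j ∨ f i ⋖ f j := by
  obtain ⟨a, b, p, q, hab, hpq, rfl⟩ := hf
  rw [Fin.le_def] at hij
  simp only [tripleTuple]
  split_ifs <;> first | omega | simp [hpq]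

lemma IsCoverTuple.mono {f : Fin m → P} (hf : IsCoverTuple f) {i j : Fin m} (hij : i ≤ j) :
    f i ≤ f j := by
  rcases hf.eq_or_covBy hij with h | h | h
  · exact h ▸ bot_le
  · exact h.le
  · exact h.le

variable [Finite P] {Q : (Fin m → P) → Prop}

lemma IsCoverTuple.normal_form [OrderTop P] {f : Fin m → P} (hf : IsCoverTuple f)
    (htop : ∃ i, f i ≠ ⊤) :
    (∃ l p q, 0 < l ∧ l ≤ m ∧ p ⋖ q ∧ f = pairTuple m l p q) ∨
    (∃ a p, 0 < a ∧ a < m ∧ p ≠ ⊥ ∧ ¬ ⊥ ⋖ p ∧ f = pairTuple m a ⊥ p) ∨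
    ∃ a b p q, 0 < a ∧ 0 < b ∧ a + b < m ∧ p ≠ ⊥ ∧ p ⋖ q ∧ f = tripleTuple m a b p q := by
  obtain ⟨j, hj⟩ := htop
  have hm : 0 < m := j.pos
  have hconst : ∀ x, x ≠ ⊤ → f = (fun _ => x) →
      ∃ l p q, 0 < l ∧ l ≤ m ∧ p ⋖ q ∧ f = pairTuple m l p q := by
    rintro x hx rfl
    obtain ⟨y, hy, -⟩ := exists_covBy_le_of_lt_of_finite (lt_top_iff_ne_top.2 hx)
    exact ⟨m, x, y, hm, le_rfl, hy, by funext i; simp [pairTuple]⟩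
  have hbot : (⊥ : P) ≠ ⊤ := fun h => hj (le_antisymm le_top (h ▸ bot_le))
  have hpair : ∀ a x, 0 < a → a ≤ m → f = pairTuple m a ⊥ x →
      (∃ l p q, 0 < l ∧ l ≤ m ∧ p ⋖ q ∧ f = pairTuple m l p q) ∨
      (∃ a p, 0 < a ∧ a < m ∧ p ≠ ⊥ ∧ ¬ ⊥ ⋖ p ∧ f = pairTuple m a ⊥ p) := by
    intro a x ha ham hfx
    by_cases hx : x = ⊥
    · exact Or.inl (hconst ⊥ hbot (by rw [hfx]; funext i; simp [pairTuple, hx]))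
    by_cases hx' : ⊥ ⋖ x
    · exact Or.inl ⟨a, ⊥, x, ha, ham, hx', hfx⟩
    rcases eq_or_lt_of_le ham with rfl | ham
    · exact Or.inl (hconst ⊥ hbot (by rw [hfx]; funext i; simp [pairTuple]))
    · exact Or.inr ⟨a, x, ha, ham, hx, hx', hfx⟩
  obtain ⟨a, b, p, q, hab, hpq, hfe⟩ := hf
  rcases Nat.eq_zero_or_pos a with rfl | ha
  · left
    rcases Nat.eq_zero_or_pos b with rfl | hb
    · have hq : f = fun _ => q := by rw [hfe]; funext i; simp [tripleTuple]
      exact hconst q (fun h => hj (by rw [hq, h])) hq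
    · exact ⟨b, p, q, hb, by omega, hpq, by rw [hfe]; funext i; simp [tripleTuple, pairTuple]⟩
  rw [← or_assoc]
  rcases Nat.eq_zero_or_pos b with rfl | hb
  · refine Or.inl (hpair a q ha (by omega) ?_)
    rw [hfe]
    funext i
    simp only [tripleTuple, pairTuple]
    split_ifs <;> first | rfl | omega
  by_cases hp : p = ⊥
  · refine Or.inl (hpair (a + b) q (by omega) hab ?_)
    rw [hfe]
    funext i
    simp only [tripleTuple, pairTuple, hp]
    split_ifs <;> first | rfl | omega
  rcases eq_or_lt_of_le hab with rfl | hab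
  · refine Or.inl (hpair a p ha (by omega) ?_)
    rw [hfe]
    funext i
    simp [tripleTuple, pairTuple]
  · exact Or.inr ⟨a, b, p, q, ha, hb, hab, hp, hpq, hfe⟩

/-- Meet-irreducible elements of the cover poset are built from meet-irreducibles of `P`. -/
lemma exists_pairTuple_of_existsUnique_covBy [OrderTop P] [Nontrivial P]
    (hQ : ∀ f, Q f ↔ IsCoverTuple f)
    (hcoatom : ¬ (⊥ : P) ⋖ ⊤ → ∃ c c' : P, c ⋖ ⊤ ∧ c' ⋖ ⊤ ∧ c ≠ c')
    {f : {f : Fin m → P // Q f}} (hf : ∃! g, f ⋖ g) :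
    ∃ l p q, 0 < l ∧ l ≤ m ∧ p ⋖ q ∧ (∀ q', p ⋖ q' → q' = q) ∧ f.1 = pairTuple m l p q := by
  have htop : ∃ i, f.1 i ≠ ⊤ := by
    by_contra hcon
    push Not at hcon
    obtain ⟨g, hg⟩ := hf.exists
    exact hg.lt.not_ge fun i => (hcon i).symm ▸ le_top
  rcases IsCoverTuple.normal_form ((hQ _).1 f.2) htop with
    ⟨l, p, q, hl, hlm, hpq, hfe⟩ | ⟨a, p, ha, ham, hp, hnp, hfe⟩ |
    ⟨a, b, p, q, ha, hb, hab, hp, hpq, hfe⟩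
  · refine ⟨l, p, q, hl, hlm, hpq, fun q' hq' => ?_, hfe⟩
    by_contra hne
    have hqq : ¬ q ≤ q' := fun h => hne ((hq'.eq_or_eq hpq.le h).resolve_left hpq.lt.ne').symm
    obtain ⟨r, hr⟩ := (Set.toFinite {r | q' ≤ r ∧ ¬ q ≤ r}).exists_maximal ⟨q', le_rfl, hqq⟩
    have hrtop : r < ⊤ := lt_top_iff_ne_top.2 fun h => hr.prop.2 (h ▸ le_top)
    obtain ⟨s, hrs, -⟩ := exists_covBy_le_of_lt_of_finite hrtop
    have hqs : q ≤ s := by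
      by_contra hqs
      exact hr.not_gt ⟨hr.prop.1.trans hrs.le, hqs⟩ hrs.lt
    have hpr : p < r := hq'.lt.trans_le hr.prop.1
    have hlt1 : f.1 < pairTuple m (l - 1) p q := by
      rw [hfe]
      refine lt_of_le_of_apply_ne (fun i => ?_) ⟨l - 1, by omega⟩ ?_
      · simp only [pairTuple]
        split_ifs <;> first | exact le_rfl | exact hpq.le | omega
      · simp only [pairTuple]
        rw [if_pos (by omega), if_neg (by omega)]
        exact hpq.ne
    have hlt2 : f.1 < pairTuple m l r s := by
      rw [hfe]
      refine lt_of_le_of_apply_ne (fun i => ?_) ⟨0, by omega⟩ ?_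
      · simp only [pairTuple]
        split_ifs
        · exact hpr.le
        · exact hqs
      · simp only [pairTuple]
        rw [if_pos hl, if_pos hl]
        exact hpr.ne
    obtain ⟨t, ht, hft, htz, htw⟩ := exists_tuple_between_of_existsUnique_covBy hf
      ((hQ _).2 (isCoverTuple_pairTuple (by omega) hpq)) ((hQ _).2 (isCoverTuple_pairTuple hlm hrs))
      hlt1 hlt2
    refine hft.not_ge fun i => ?_
    have h1 := htz i
    have h2 := htw i
    have h3 := hft.le i
    rw [hfe] at h3 ⊢
    simp only [pairTuple] at h1 h2 h3 ⊢
    split_ifs at h1 h2 h3 ⊢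
    · exact h1
    · rcases hpq.eq_or_eq h3 h1 with h | h
      · exact h.le
      · exact absurd (h ▸ h2) hr.prop.2
    · omega
    · exact h1
  · exfalso
    obtain ⟨c, hcp, -⟩ := exists_le_covBy_of_lt_of_finite (bot_lt_iff_ne_bot.2 hp)
    have hlt : ∀ c, c ⋖ p → f.1 < tripleTuple m (a - 1) 1 c p := by
      intro c hcp
      rw [hfe]
      refine lt_of_le_of_apply_ne (fun i => ?_) ⟨a - 1, by omega⟩ ?_
      · simp only [pairTuple, tripleTuple]
        split_ifs <;> first | exact le_rfl | exact bot_le | omega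
      · simp only [pairTuple, tripleTuple]
        rw [if_pos (by omega), if_neg (by omega), if_pos (by omega)]
        rintro rfl
        exact hnp hcp
    by_cases hpt : p = ⊤
    · subst hpt
      obtain ⟨c, c', hc, hc', hne⟩ := hcoatom hnp
      obtain ⟨t, ht, hft, htz, htw⟩ := exists_tuple_between_of_existsUnique_covBy hf
        ((hQ _).2 (isCoverTuple_tripleTuple (by omega) hc))
        ((hQ _).2 (isCoverTuple_tripleTuple (by omega) hc')) (hlt c hc) (hlt c' hc')
      have ham1 : a - 1 < m := by omega
      have e1 := htz ⟨a - 1, ham1⟩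
      have e2 := htw ⟨a - 1, ham1⟩
      simp only [tripleTuple] at e1 e2
      rw [if_neg (by omega), if_pos (by omega)] at e1 e2
      have e3 := hft.le ⟨a, ham⟩
      rw [hfe] at e3
      simp only [pairTuple, lt_irrefl, if_false, top_le_iff] at e3
      rcases ((hQ t).1 ht).eq_or_covBy (i := ⟨a - 1, ham1⟩) (j := ⟨a, ham⟩)
        (by simp [Fin.le_def]) with h | h | h
      · refine hft.not_ge fun i => ?_
        rw [hfe]
        have h1 := htz i
        simp only [pairTuple]
        split_ifs with hi
        · rw [← h]
          exact ((hQ t).1 ht).mono (by rw [Fin.le_def]; simp only; omega)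
        · exact le_top
      · rw [h, e3] at e1
        exact hc.lt.not_ge e1
      · rw [e3] at h
        have h1 : c = t ⟨a - 1, ham1⟩ := (h.eq_or_eq e1 hc.le).resolve_right hc.ne
        have h2 : c' = t ⟨a - 1, ham1⟩ := (h.eq_or_eq e2 hc'.le).resolve_right hc'.ne
        exact hne (h1.trans h2.symm)
    · obtain ⟨y, hpy, -⟩ := exists_covBy_le_of_lt_of_finite (lt_top_iff_ne_top.2 hpt)
      refine not_disjoint_support_of_existsUnique_covBy hf
        ((hQ _).2 (isCoverTuple_tripleTuple (a := a - 1) (b := 1) (by omega) hcp))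
        ((hQ _).2 (isCoverTuple_tripleTuple (a := a) (b := m - 1 - a) (by omega) hpy))
        (hlt c hcp) ?_ fun i => ?_
      · rw [hfe]
        refine lt_of_le_of_apply_ne (fun i => ?_) ⟨m - 1, by omega⟩ ?_
        · simp only [pairTuple, tripleTuple]
          split_ifs <;> first | exact le_rfl | exact hpy.le
        · simp only [pairTuple, tripleTuple]
          rw [if_neg (by omega), if_neg (by omega), if_neg (by omega)]
          exact hpy.ne
      · rw [hfe]
        simp only [pairTuple, tripleTuple]
        split_ifs <;> first | omega | simp
  · exfalso
    refine not_disjoint_support_of_existsUnique_covBy hf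
      ((hQ _).2 (isCoverTuple_tripleTuple (a := a - 1) (b := b + 1) (by omega) hpq))
      ((hQ _).2 (isCoverTuple_tripleTuple (a := a) (b := b - 1) (by omega) hpq)) ?_ ?_ fun i => ?_
    · rw [hfe]
      refine lt_of_le_of_apply_ne (fun i => ?_) ⟨a - 1, by omega⟩ ?_
      · simp only [tripleTuple]
        split_ifs <;> first | exact le_rfl | exact bot_le | omega
      · simp only [tripleTuple]
        rw [if_pos (by omega), if_neg (by omega), if_pos (by omega)]
        exact hp.symm
    · rw [hfe]
      refine lt_of_le_of_apply_ne (fun i => ?_) ⟨a + b - 1, by omega⟩ ?_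
      · simp only [tripleTuple]
        split_ifs <;> first | exact le_rfl | exact hpq.le | omega
      · simp only [tripleTuple]
        rw [if_neg (by omega), if_pos (by omega), if_neg (by omega), if_neg (by omega)]
        exact hpq.ne
    · rw [hfe]
      simp only [tripleTuple]
      split_ifs <;> first | omega | simp

lemma existsUnique_covBy_pairTuple [OrderTop P] (hQ : ∀ f, Q f ↔ IsCoverTuple f)
    (hatom : (∃! y : P, ⊥ ⋖ y) → (⊥ : P) ⋖ ⊤) {l : ℕ} (hl : 0 < l) (hlm : l ≤ m) {p q : P}
    (hpq : p ⋖ q) (huniq : ∀ q', p ⋖ q' → q' = q) {f : {f : Fin m → P // Q f}}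
    (hfe : f.1 = pairTuple m l p q) : ∃! g, f ⋖ g := by
  refine existsUnique_covBy_of_forall_lt
    (y := ⟨pairTuple m (l - 1) p q, (hQ _).2 (isCoverTuple_pairTuple (by omega) hpq)⟩) ?_ ?_
  · change f.1 < pairTuple m (l - 1) p q
    rw [hfe]
    refine lt_of_le_of_apply_ne (fun i => ?_) ⟨l - 1, by omega⟩ ?_
    · simp only [pairTuple]
      split_ifs <;> first | exact le_rfl | exact hpq.le | omega
    · simp only [pairTuple]
      rw [if_pos (by omega), if_neg (by omega)]
      exact hpq.ne
  · rintro ⟨g, hg⟩ hfg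
    change f.1 < g at hfg
    change pairTuple m (l - 1) p q ≤ g
    rw [hfe] at hfg
    have hg' := (hQ g).1 hg
    have hl1 : l - 1 < m := by omega
    have hle : ∀ i, pairTuple m l p q i ≤ g i := hfg.le
    have key : q ≤ g ⟨l - 1, hl1⟩ := by
      have h1 := hle ⟨l - 1, hl1⟩
      simp only [pairTuple] at h1
      rw [if_pos (by omega)] at h1
      rcases eq_or_lt_of_le h1 with h | h
      · exfalso
        refine hfg.not_ge fun j => ?_
        have h2 := hle j
        simp only [pairTuple] at h2 ⊢
        split_ifs at h2 ⊢ with hj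
        · rw [h]
          exact hg'.mono (by rw [Fin.le_def]; simp only; omega)
        · rcases hg'.eq_or_covBy (i := ⟨l - 1, hl1⟩) (j := j)
            (by rw [Fin.le_def]; simp only; omega) with h3 | h3 | h3
          · rw [h3] at h
            subst h
            rw [← huniq ⊤ (hatom ⟨q, hpq, huniq⟩)]
            exact le_top
          · rw [← h3, ← h] at h2
            exact absurd h2 hpq.lt.not_ge
          · rw [← h] at h3
            exact (huniq _ h3).le
      · obtain ⟨q', hq', hle'⟩ := exists_covBy_le_of_lt_of_finite h
        exact huniq q' hq' ▸ hle'
    intro i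
    by_cases hi : (i : ℕ) = l - 1
    · have : i = ⟨l - 1, hl1⟩ := Fin.ext hi
      subst this
      simpa [pairTuple] using key
    · refine le_trans (le_of_eq ?_) (hle i)
      simp only [pairTuple]
      split_ifs <;> first | rfl | omega

lemma exists_pairTuple_bot_of_existsUnique_covBy [Nontrivial P]
    (hQ : ∀ f, Q f ↔ IsCoverTuple f) {f : {f : Fin m → P // Q f}} (hf : ∃! g, g ⋖ f) :
    ∃ a p, a < m ∧ (∃! c, c ⋖ p) ∧ f.1 = pairTuple m a ⊥ p := by
  have hform : ∃ a p, a ≤ m ∧ f.1 = pairTuple m a ⊥ p := by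
    obtain ⟨a, b, p, q, hab, hpq, hfe⟩ := (hQ _).1 f.2
    rcases Nat.eq_zero_or_pos b with rfl | hb
    · refine ⟨a, q, by omega, ?_⟩
      rw [hfe]
      funext i
      simp only [tripleTuple, pairTuple]
      split_ifs <;> first | rfl | omega
    by_cases hp : p = ⊥
    · refine ⟨a + b, q, hab, ?_⟩
      rw [hfe]
      funext i
      simp only [tripleTuple, pairTuple, hp]
      split_ifs <;> first | rfl | omega
    rcases eq_or_lt_of_le hab with rfl | hab
    · refine ⟨a, p, by omega, ?_⟩
      rw [hfe]
      funext i
      simp [tripleTuple, pairTuple]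
    exfalso
    refine not_disjoint_support_of_existsUnique_covBy' hf
      ((hQ _).2 (isCoverTuple_tripleTuple (a := a + 1) (b := b - 1) (by omega) hpq))
      ((hQ _).2 (isCoverTuple_tripleTuple (a := a) (b := b + 1) (by omega) hpq)) ?_ ?_ fun i => ?_
    · rw [hfe]
      refine lt_of_le_of_apply_ne (fun i => ?_) ⟨a, by omega⟩ ?_
      · simp only [tripleTuple]
        split_ifs <;> first | exact le_rfl | exact bot_le | omega
      · simp only [tripleTuple]
        rw [if_pos (by omega), if_neg (by omega), if_pos (by omega)]
        exact Ne.symm hp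
    · rw [hfe]
      refine lt_of_le_of_apply_ne (fun i => ?_) ⟨a + b, by omega⟩ ?_
      · simp only [tripleTuple]
        split_ifs <;> first | exact le_rfl | exact hpq.le | omega
      · simp only [tripleTuple]
        rw [if_neg (by omega), if_pos (by omega), if_neg (by omega), if_neg (by omega)]
        exact hpq.ne
    · rw [hfe]
      simp only [tripleTuple]
      split_ifs <;> first | omega | simp
  obtain ⟨a, p, ham, hfe⟩ := hform
  have hne : ∃ i, f.1 i ≠ ⊥ := by
    by_contra hcon
    push Not at hcon
    obtain ⟨g, hg⟩ := hf.exists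
    exact hg.lt.not_ge fun i => (hcon i).symm ▸ bot_le
  obtain ⟨i, hi⟩ := hne
  rw [hfe] at hi
  simp only [pairTuple] at hi
  have ham' : a < m := by
    by_contra hcon
    exact hi (if_pos (by omega))
  have hp : p ≠ ⊥ := by
    rintro rfl
    simp at hi
  refine ⟨a, p, ham', ?_, hfe⟩
  obtain ⟨c, hc, -⟩ := exists_le_covBy_of_lt_of_finite (bot_lt_iff_ne_bot.2 hp)
  refine ⟨c, hc, fun c' hc' => ?_⟩
  by_contra hcc
  have hlt : ∀ c, c ⋖ p → tripleTuple m a 1 c p < f.1 := by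
    intro c hcp
    rw [hfe]
    refine lt_of_le_of_apply_ne (fun i => ?_) ⟨a, by omega⟩ ?_
    · simp only [pairTuple, tripleTuple]
      split_ifs <;> first | exact le_rfl | exact hcp.le
    · simp only [pairTuple, tripleTuple]
      rw [if_neg (by omega), if_pos (by omega), if_neg (by omega)]
      exact hcp.ne
  obtain ⟨t, ht, htf, hzt, hwt⟩ := exists_tuple_between_of_existsUnique_covBy' hf
    ((hQ _).2 (isCoverTuple_tripleTuple (by omega) hc))
    ((hQ _).2 (isCoverTuple_tripleTuple (by omega) hc')) (hlt c hc) (hlt c' hc')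
  refine htf.not_ge fun j => ?_
  have h1 := hzt j
  have h2 := hwt j
  have h3 := htf.le j
  rw [hfe] at h3 ⊢
  simp only [pairTuple, tripleTuple] at h1 h2 h3 ⊢
  split_ifs at h1 h2 h3 ⊢
  · exact h1
  · rcases hc.eq_or_eq h1 h3 with h | h
    · rw [h] at h2
      exact absurd ((hc'.eq_or_eq h2 hc.le).resolve_right hc.ne).symm hcc
    · exact h.ge
  · exact h1

lemma existsUnique_covBy_pairTuple_bot (hQ : ∀ f, Q f ↔ IsCoverTuple f) {a : ℕ} (ham : a < m)
    {p : P} (hp : ∃! c, c ⋖ p) {f : {f : Fin m → P // Q f}} (hfe : f.1 = pairTuple m a ⊥ p) :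
    ∃! g, g ⋖ f := by
  obtain ⟨c, hc, huniq⟩ := hp
  refine existsUnique_covBy_of_forall_gt
    (y := ⟨tripleTuple m a 1 c p, (hQ _).2 (isCoverTuple_tripleTuple (by omega) hc)⟩) ?_ ?_
  · change tripleTuple m a 1 c p < f.1
    rw [hfe]
    refine lt_of_le_of_apply_ne (fun i => ?_) ⟨a, by omega⟩ ?_
    · simp only [pairTuple, tripleTuple]
      split_ifs <;> first | exact le_rfl | exact hc.le
    · simp only [pairTuple, tripleTuple]
      rw [if_neg (by omega), if_pos (by omega), if_neg (by omega)]
      exact hc.ne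
  · rintro ⟨h, hh⟩ hhf
    change h < f.1 at hhf
    change h ≤ tripleTuple m a 1 c p
    rw [hfe] at hhf
    have hle : ∀ i, h i ≤ pairTuple m a ⊥ p i := hhf.le
    have h1 := hle ⟨a, ham⟩
    simp only [pairTuple, lt_irrefl, if_false] at h1
    have hac : h ⟨a, ham⟩ ≤ c := by
      rcases eq_or_lt_of_le h1 with h2 | h2
      · exfalso
        refine hhf.not_ge fun j => ?_
        simp only [pairTuple]
        split_ifs with hj
        · exact bot_le
        · rw [← h2]
          exact ((hQ h).1 hh).mono (by rw [Fin.le_def]; simp only; omega)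
      · obtain ⟨c', hc', hle'⟩ := exists_le_covBy_of_lt_of_finite h2
        exact huniq c' hc' ▸ hle'
    intro i
    by_cases hi : (i : ℕ) = a
    · have : i = ⟨a, ham⟩ := Fin.ext hi
      subst this
      simpa [tripleTuple] using hac
    · refine (hle i).trans (le_of_eq ?_)
      simp only [pairTuple, tripleTuple]
      split_ifs <;> first | rfl | omega

end CoverPoset

section MCover

variable {m n : ℕ}

lemma isTamariCoverTuple_iff (f : Fin m → DyckM 1 n) :
    IsTamariCoverTuple m n f ↔ IsCoverTuple f := by
  constructor
  · rintro ⟨z, l₀, l₁, l₂, p, q, hz, hl, hpq, hf⟩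
    obtain rfl : z = ⊥ := le_antisymm (hz ⊥) bot_le
    exact ⟨l₀, l₁, p, q, by omega, relCovBy_iff_covBy.1 hpq, funext hf⟩
  · rintro ⟨a, b, p, q, hab, hpq, rfl⟩
    exact ⟨⊥, a, b, m - (a + b), p, q, fun x => bot_le (a := x), by omega,
      relCovBy_iff_covBy.2 hpq, fun _ => rfl⟩

instance : PartialOrder (TamariMCover m n) :=
  inferInstanceAs (PartialOrder {f : Fin m → DyckM 1 n // IsTamariCoverTuple m n f})

lemma DyckM.two_le_of_ne {u v : DyckM m n} (h : u ≠ v) : 2 ≤ n := by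
  by_contra hn
  exact h (Subtype.ext (funext fun j => by
    rw [u.val_zero (by omega), v.val_zero (by omega)]))

lemma DyckM.nontrivial (hm : 0 < m) (hn : 2 ≤ n) : Nontrivial (DyckM m n) := by
  have h := rectPath_covBy (m := m) (n := n) (i := 1) (c := 1) (by omega) (by omega) (by omega)
    (by omega)
  exact ⟨_, _, h.ne⟩

lemma TamariMCover.two_le (f : TamariMCover m n) : 2 ≤ n := by
  obtain ⟨_, _, p, q, -, hpq, -⟩ := (isTamariCoverTuple_iff _).1 f.2
  exact DyckM.two_le_of_ne hpq.ne

lemma bot_covBy_top_of_two : (⊥ : DyckM 1 2) ⋖ ⊤ := by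
  have h := rectPath_covBy (m := 1) (n := 2) (i := 1) (c := 1) (by omega) (by omega) (by omega)
    (by omega)
  rw [Nat.sub_self, rectPath_zero] at h
  convert h
  refine Subtype.ext (funext fun j => ?_)
  rw [DyckM.bot_apply, rectPath_apply _ _ (by omega)]
  split_ifs <;> omega

lemma exists_two_coatoms (hn : 2 ≤ n) (h : ¬ (⊥ : DyckM 1 n) ⋖ ⊤) :
    ∃ c c' : DyckM 1 n, c ⋖ ⊤ ∧ c' ⋖ ⊤ ∧ c ≠ c' := by
  have hn3 : 3 ≤ n := by
    by_contra hlt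
    obtain rfl : n = 2 := by omega
    exact h bot_covBy_top_of_two
  have hc : ∀ i, 0 < i → i < n → rectPath 1 n i 1 ⋖ ⊤ := fun i hi hin => by
    have := rectPath_covBy (m := 1) hi hin (c := 1) (by omega) (by omega)
    rwa [Nat.sub_self, rectPath_zero] at this
  refine ⟨_, _, hc 1 (by omega) (by omega), hc 2 (by omega) (by omega), fun heq => ?_⟩
  have := congrArg (fun u : DyckM 1 n => u.1 ⟨1, by omega⟩) heq
  simp [rectPath] at this

lemma bot_covBy_top_of_existsUnique_covBy (h : ∃! y : DyckM 1 n, ⊥ ⋖ y) :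
    (⊥ : DyckM 1 n) ⋖ ⊤ := by
  obtain ⟨i, c, hi, hin, hc0, hc, heq⟩ := DyckM.existsUnique_covBy_iff.1 h
  have hval := fun j => congrArg (fun u : DyckM 1 n => u.1 j) heq
  simp only [DyckM.bot_apply, rectPath_apply _ _ hc] at hval
  have h1 := hval ⟨1, by omega⟩
  obtain rfl : n = 2 := by
    by_contra hne
    have h2 := hval ⟨2, by omega⟩
    simp only at h1 h2
    split_ifs at h1 h2
    omega
  exact bot_covBy_top_of_two

/-- The tuple of `T_n^⟨m⟩` corresponding to the meet-irreducible path `rectPath m n i c`. -/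
def rectTuple (m n i c : ℕ) : Fin m → DyckM 1 n :=
  pairTuple m ((c - 1) % m + 1) (rectPath 1 n i ((c - 1) / m + 1)) (rectPath 1 n i ((c - 1) / m))

lemma div_add_one_le {i c : ℕ} (hc0 : 0 < c) (hc : c ≤ m * i) : (c - 1) / m + 1 ≤ 1 * i := by
  rcases Nat.eq_zero_or_pos m with rfl | hm
  · omega
  rw [one_mul, Nat.succ_le_iff, Nat.div_lt_iff_lt_mul hm, mul_comm]
  omega

lemma rectTuple_apply (i c : ℕ) (k : Fin m) :
    rectTuple m n i c k =
      rectPath 1 n i ((c - 1) / m + if (k : ℕ) ≤ (c - 1) % m then 1 else 0) := by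
  simp only [rectTuple, pairTuple, Nat.lt_succ_iff]
  split_ifs <;> rfl

lemma rectTuple_le_iff (hm : 0 < m) {i i' c c' : ℕ} (hi : 0 < i) (hin : i < n) (hin' : i' < n)
    (hc0 : 0 < c) (hc : c ≤ m * i) (hc0' : 0 < c') (hc' : c' ≤ m * i') :
    rectTuple m n i c ≤ rectTuple m n i' c' ↔ i = i' ∧ c' ≤ c := by
  have hb := div_add_one_le hc0 hc
  have hb' := div_add_one_le hc0' hc'
  have hd := Nat.div_add_mod (c - 1) m
  have hd' := Nat.div_add_mod (c' - 1) m
  have hl := Nat.mod_lt (c - 1) hm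
  have hl' := Nat.mod_lt (c' - 1) hm
  have hkey : ∀ k : Fin m, rectTuple m n i c k ≤ rectTuple m n i' c' k ↔
      ((c' - 1) / m + if (k : ℕ) ≤ (c' - 1) % m then 1 else 0) = 0 ∨ i = i' ∧
        ((c' - 1) / m + if (k : ℕ) ≤ (c' - 1) % m then 1 else 0) ≤
          (c - 1) / m + if (k : ℕ) ≤ (c - 1) % m then 1 else 0 := fun k => by
    rw [rectTuple_apply, rectTuple_apply]
    exact rectPath_le_iff hi hin hin' (by split_ifs <;> omega) (by split_ifs <;> omega)
  rw [Pi.le_def]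
  simp only [hkey]
  generalize (c - 1) / m = a at *
  generalize (c' - 1) / m = a' at *
  generalize (c - 1) % m = l at *
  generalize (c' - 1) % m = l' at *
  clear hkey
  constructor
  · intro h
    have h0 := h ⟨0, hm⟩
    simp only [zero_le, if_true] at h0
    have h1 := h ⟨l', hl'⟩
    simp only [le_refl, if_true] at h1
    refine ⟨by omega, ?_⟩
    rcases (show a' ≤ a by omega).eq_or_lt with rfl | hlt
    · by_contra hlt
      rw [if_neg (by omega)] at h1
      omega
    · have := Nat.mul_le_mul_left m (Nat.succ_le_of_lt hlt)
      rw [Nat.mul_succ] at this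
      omega
  · rintro ⟨rfl, hcc⟩ k
    refine Or.inr ⟨rfl, ?_⟩
    rcases lt_trichotomy a' a with hlt | rfl | hlt
    · split_ifs <;> omega
    · split_ifs <;> omega
    · have := Nat.mul_le_mul_left m (Nat.succ_le_of_lt hlt)
      rw [Nat.mul_succ] at this
      omega

lemma TamariMCover.existsUnique_covBy_iff (hm : 0 < m) {f : TamariMCover m n} :
    (∃! g, f ⋖ g) ↔
      ∃ i c, 0 < i ∧ i < n ∧ 0 < c ∧ c ≤ m * i ∧ f.1 = rectTuple m n i c := by
  have hn := f.two_le
  have := DyckM.nontrivial one_pos hn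
  constructor
  · intro h
    obtain ⟨l, p, q, hl, hlm, hpq, huniq, hf⟩ :=
      exists_pairTuple_of_existsUnique_covBy isTamariCoverTuple_iff (exists_two_coatoms hn) h
    obtain ⟨i, a, hi, hin, ha0, ha, rfl⟩ := DyckM.existsUnique_covBy_iff.1 ⟨q, hpq, huniq⟩
    obtain rfl := (covBy_rectPath_iff hi hin ha0 ha).1 hpq
    obtain ⟨b, rfl⟩ : ∃ b, a = b + 1 := ⟨a - 1, by omega⟩
    have hmul : m * (b + 1) ≤ m * i := Nat.mul_le_mul_left m (by omega)
    rw [Nat.mul_succ] at hmul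
    have hsub : m * b + l - 1 = m * b + (l - 1) := by omega
    refine ⟨i, m * b + l, hi, hin, by omega, by omega, ?_⟩
    rw [hf, rectTuple, hsub, Nat.mul_add_mod, Nat.mul_add_div hm, Nat.mod_eq_of_lt (by omega),
      Nat.div_eq_of_lt (by omega), Nat.sub_add_cancel hl]
    rfl
  · rintro ⟨i, c, hi, hin, hc0, hc, hf⟩
    have hb := div_add_one_le hc0 hc
    have hiff := fun v => covBy_rectPath_iff (m := 1) (v := v) hi hin (Nat.succ_pos _) hb
    exact existsUnique_covBy_pairTuple isTamariCoverTuple_iff bot_covBy_top_of_existsUnique_covBy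
      (Nat.succ_pos _) (Nat.mod_lt _ hm) ((hiff _).2 rfl) (fun q hq => (hiff q).1 hq) hf

/-- The tuple of `T_n^⟨m⟩` corresponding to the join-irreducible path `blockPath m n i k s`. -/
def blockTuple (m n i k s : ℕ) : Fin m → DyckM 1 n :=
  pairTuple m (m - s) ⊥ (blockPath 1 n i k 1)

lemma blockTuple_le_iff {i k s i' k' s' : ℕ} (hi : 0 < i) (hi' : 0 < i') (hik : i ≤ k)
    (hkn : k < n) (hs0 : 0 < s) (hs : s ≤ m) (hs0' : 0 < s') :
    blockTuple m n i k s ≤ blockTuple m n i' k' s' ↔ i = i' ∧ k ≤ k' ∧ s ≤ s' := by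
  have hiff := blockPath_le_iff (m := 1) (k' := k') hi hi' hik hkn one_pos le_rfl le_rfl
  have hbot : ¬ blockPath 1 n i k 1 ≤ ⊥ := fun h => by
    obtain ⟨c, hc, -⟩ := DyckM.existsUnique_covBy_blockPath (m := 1) hi hik hkn one_pos le_rfl
    exact (hc.lt.trans_le h).not_ge bot_le
  constructor
  · intro h
    have h1 := h ⟨m - 1, by omega⟩
    have h2 := h ⟨m - s, by omega⟩
    simp only [blockTuple, pairTuple] at h1 h2
    rw [if_neg (by omega), if_neg (by omega), hiff] at h1
    refine ⟨h1.1, h1.2.1, ?_⟩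
    by_contra hlt
    rw [if_neg (by omega), if_pos (by omega)] at h2
    exact hbot h2
  · rintro ⟨rfl, hk, hss⟩ j
    simp only [blockTuple, pairTuple]
    split_ifs
    · exact le_rfl
    · exact bot_le
    · omega
    · exact hiff.2 ⟨rfl, hk, le_rfl⟩

lemma TamariMCover.existsUnique_covBy_iff' {f : TamariMCover m n} :
    (∃! g, g ⋖ f) ↔
      ∃ i k s, 0 < i ∧ i ≤ k ∧ k < n ∧ 0 < s ∧ s ≤ m ∧ f.1 = blockTuple m n i k s := by
  have := DyckM.nontrivial one_pos f.two_le
  constructor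
  · intro h
    obtain ⟨a, p, ham, hp, hf⟩ := exists_pairTuple_bot_of_existsUnique_covBy isTamariCoverTuple_iff h
    obtain ⟨i, k, s, hi, hik, hkn, hs0, hs, rfl⟩ := DyckM.existsUnique_covBy_iff'.1 hp
    obtain rfl : s = 1 := by omega
    exact ⟨i, k, m - a, hi, hik, hkn, by omega, by omega, by
      rw [hf, blockTuple, Nat.sub_sub_self ham.le]⟩
  · rintro ⟨i, k, s, hi, hik, hkn, hs0, hs, hf⟩
    exact existsUnique_covBy_pairTuple_bot isTamariCoverTuple_iff (by omega)
      (DyckM.existsUnique_covBy_blockPath hi hik hkn one_pos le_rfl) hf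

lemma isTamariCoverTuple_rectTuple (hm : 0 < m) {i c : ℕ} (hi : 0 < i) (hin : i < n) (hc0 : 0 < c)
    (hc : c ≤ m * i) : IsTamariCoverTuple m n (rectTuple m n i c) :=
  (isTamariCoverTuple_iff _).2 (isCoverTuple_pairTuple (Nat.mod_lt _ hm)
    (rectPath_covBy hi hin (Nat.succ_pos _) (div_add_one_le hc0 hc)))

lemma isTamariCoverTuple_blockTuple {i k s : ℕ} (hi : 0 < i) (hik : i ≤ k) (hkn : k < n) :
    IsTamariCoverTuple m n (blockTuple m n i k s) := by
  have := DyckM.nontrivial (n := n) one_pos (by omega)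
  exact (isTamariCoverTuple_iff _).2 (isCoverTuple_pairTuple_bot (by omega) _)

theorem exists_equiv_meetIrred (hm : 0 < m) :
    ∃ e : {u : DyckM m n // RelMeetIrred (TamariLe m n) u} ≃
        {f : TamariMCover m n // RelMeetIrred (TamariMCoverLe m n) f},
      ∀ x y, TamariLe m n x.1 y.1 ↔ TamariMCoverLe m n (e x).1 (e y).1 := by
  refine exists_equiv_of_parametrizations
    (X := {u : DyckM m n // RelMeetIrred (TamariLe m n) u})
    (Y := {f : TamariMCover m n // RelMeetIrred (TamariMCoverLe m n) f})
    (A := {a : ℕ × ℕ // 0 < a.1 ∧ a.1 < n ∧ 0 < a.2 ∧ a.2 ≤ m * a.1})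
    (R := fun a b => a.1.1 = b.1.1 ∧ b.1.2 ≤ a.1.2)
    (rX := fun x y => TamariLe m n x.1 y.1) (rY := fun x y => TamariMCoverLe m n x.1 y.1)
    (fun a b hab hba => Subtype.ext (Prod.ext hab.1 (le_antisymm hba.2 hab.2)))
    (fun a => ⟨rfl, le_rfl⟩)
    (fun a => ⟨rectPath m n a.1.1 a.1.2, relMeetIrred_iff.2 (DyckM.existsUnique_covBy_iff.2
      ⟨_, _, a.2.1, a.2.2.1, a.2.2.2.1, a.2.2.2.2, rfl⟩)⟩)
    (fun a => ⟨⟨rectTuple m n a.1.1 a.1.2,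
        isTamariCoverTuple_rectTuple hm a.2.1 a.2.2.1 a.2.2.2.1 a.2.2.2.2⟩,
      relMeetIrred_iff.2 ((TamariMCover.existsUnique_covBy_iff hm).2
        ⟨_, _, a.2.1, a.2.2.1, a.2.2.2.1, a.2.2.2.2, rfl⟩)⟩) ?_ ?_ ?_ ?_
  · rintro ⟨u, hu⟩
    obtain ⟨i, c, hi, hin, hc0, hc, rfl⟩ := DyckM.existsUnique_covBy_iff.1 (relMeetIrred_iff.1 hu)
    exact ⟨⟨(i, c), hi, hin, hc0, hc⟩, rfl⟩
  · rintro ⟨f, hf⟩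
    obtain ⟨i, c, hi, hin, hc0, hc, h⟩ :=
      (TamariMCover.existsUnique_covBy_iff hm).1 (relMeetIrred_iff.1 hf)
    exact ⟨⟨(i, c), hi, hin, hc0, hc⟩, Subtype.ext (Subtype.ext h.symm)⟩
  · rintro ⟨⟨i, c⟩, hi, hin, hc0, hc⟩ ⟨⟨i', c'⟩, hi', hin', hc0', hc'⟩
    exact (rectPath_le_iff hi hin hin' hc hc').trans (or_iff_right hc0'.ne')
  · rintro ⟨⟨i, c⟩, hi, hin, hc0, hc⟩ ⟨⟨i', c'⟩, hi', hin', hc0', hc'⟩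
    exact rectTuple_le_iff hm hi hin hin' hc0 hc hc0' hc'

theorem exists_equiv_joinIrred :
    ∃ e : {u : DyckM m n // RelJoinIrred (TamariLe m n) u} ≃
        {f : TamariMCover m n // RelJoinIrred (TamariMCoverLe m n) f},
      ∀ x y, TamariLe m n x.1 y.1 ↔ TamariMCoverLe m n (e x).1 (e y).1 := by
  refine exists_equiv_of_parametrizations
    (X := {u : DyckM m n // RelJoinIrred (TamariLe m n) u})
    (Y := {f : TamariMCover m n // RelJoinIrred (TamariMCoverLe m n) f})
    (A := {a : ℕ × ℕ × ℕ // 0 < a.1 ∧ a.1 ≤ a.2.1 ∧ a.2.1 < n ∧ 0 < a.2.2 ∧ a.2.2 ≤ m})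
    (R := fun a b => a.1.1 = b.1.1 ∧ a.1.2.1 ≤ b.1.2.1 ∧ a.1.2.2 ≤ b.1.2.2)
    (rX := fun x y => TamariLe m n x.1 y.1) (rY := fun x y => TamariMCoverLe m n x.1 y.1)
    (fun a b hab hba => Subtype.ext (Prod.ext hab.1
      (Prod.ext (le_antisymm hab.2.1 hba.2.1) (le_antisymm hab.2.2 hba.2.2))))
    (fun a => ⟨rfl, le_rfl, le_rfl⟩)
    (fun a => ⟨blockPath m n a.1.1 a.1.2.1 a.1.2.2, relJoinIrred_iff.2
      (DyckM.existsUnique_covBy_iff'.2 ⟨_, _, _, a.2.1, a.2.2.1, a.2.2.2.1, a.2.2.2.2.1,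
        a.2.2.2.2.2, rfl⟩)⟩)
    (fun a => ⟨⟨blockTuple m n a.1.1 a.1.2.1 a.1.2.2,
        isTamariCoverTuple_blockTuple a.2.1 a.2.2.1 a.2.2.2.1⟩,
      relJoinIrred_iff.2 (TamariMCover.existsUnique_covBy_iff'.2 ⟨_, _, _, a.2.1, a.2.2.1,
        a.2.2.2.1, a.2.2.2.2.1, a.2.2.2.2.2, rfl⟩)⟩) ?_ ?_ ?_ ?_
  · rintro ⟨u, hu⟩
    obtain ⟨i, k, s, hi, hik, hkn, hs0, hs, rfl⟩ :=
      DyckM.existsUnique_covBy_iff'.1 (relJoinIrred_iff.1 hu)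
    exact ⟨⟨(i, k, s), hi, hik, hkn, hs0, hs⟩, rfl⟩
  · rintro ⟨f, hf⟩
    obtain ⟨i, k, s, hi, hik, hkn, hs0, hs, h⟩ :=
      TamariMCover.existsUnique_covBy_iff'.1 (relJoinIrred_iff.1 hf)
    exact ⟨⟨(i, k, s), hi, hik, hkn, hs0, hs⟩, Subtype.ext (Subtype.ext h.symm)⟩
  · rintro ⟨⟨i, k, s⟩, hi, hik, hkn, hs0, hs⟩ ⟨⟨i', k', s'⟩, hi', hik', hkn', hs0', hs'⟩
    exact blockPath_le_iff hi hi' hik hkn hs0 hs hs'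
  · rintro ⟨⟨i, k, s⟩, hi, hik, hkn, hs0, hs⟩ ⟨⟨i', k', s'⟩, hi', hik', hkn', hs0', hs'⟩
    exact blockTuple_le_iff hi hi' hik hkn hs0 hs hs0'

end MCover

/-- The subposets of meet-irreducible (resp. join-irreducible) elements of the m-Tamari
lattice `T_n^(m)` and of the m-cover poset `T_n^⟨m⟩` are order-isomorphic. -/
theorem stmt_16 (m n : ℕ) (hm : 0 < m) (hn : 0 < n) :
    (∃ e : {u : DyckM m n // RelMeetIrred (TamariLe m n) u} ≃
        {f : TamariMCover m n // RelMeetIrred (TamariMCoverLe m n) f},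
      ∀ x y, TamariLe m n x.1 y.1 ↔ TamariMCoverLe m n (e x).1 (e y).1) ∧
    (∃ e : {u : DyckM m n // RelJoinIrred (TamariLe m n) u} ≃
        {f : TamariMCover m n // RelJoinIrred (TamariMCoverLe m n) f},
      ∀ x y, TamariLe m n x.1 y.1 ↔ TamariMCoverLe m n (e x).1 (e y).1) := by
  exact ⟨exists_equiv_meetIrred hm, exists_equiv_joinIrred⟩
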